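/- Let g be a seven-dimensional complex Lie algebra with a six-dimensional (complex) abelian ideal u, let e₇ ∈ g∖u, let V₂ and V₄ be complex subspaces of u of dimensions 2 and 4 with u = V₂ ⊕ V₄, and let ω ∈ Λ²V₄* be a nondegenerate complex two-form on V₄. Then g admits a cocalibrated (G₂)_ℂ-structure — i.e. there exists a closed four-form Ψ ∈ Λ⁴g* such that for some basis f¹,…,f⁷ of g*, Ψ = f^{1234}+f^{1256}+f^{3456}−f^{2467}+f^{2357}+f^{1457}+f^{1367} — if and only if ad(e₇)|_u ∈ End(u) is similar under GL(u) to an element of the set S := {f ∈ End(u) : f(V₄) ⊆ V₄ and pr_{V₄}∘f|_{V₄} = −(tr(f₂)/2)·id_{V₄} + f₄ for some f₄ ∈ sp(V₄,ω), where f₂ := pr_{V₂}∘f|_{V₂}}. -/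

import Mathlib

open Module

section AltMachinery

variable {F : Type*} [Field F] {V : Type*} [AddCommGroup V] [Module F V]

/-- The wedge `φ₁ ∧ … ∧ φ_m` of `m` covectors, as an alternating `m`-form on `V`:
`(φ₁ ∧ … ∧ φ_m)(v₁,…,v_m) = det (φ_i (v_j))`. -/
noncomputable def wedgeCov (m : ℕ) (φ : Fin m → Module.Dual F V) :
    V [⋀^Fin m]→ₗ[F] F :=
  (Matrix.detRowAlternating : (Fin m → F) [⋀^Fin m]→ₗ[F] F).compLinearMap
    (LinearMap.pi φ)

/-- A decomposable alternating `m`-form: a wedge of `m` covectors. -/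
def AltDec (m : ℕ) (X : V [⋀^Fin m]→ₗ[F] F) : Prop :=
  ∃ φ : Fin m → Module.Dual F V, X = wedgeCov m φ

/-- The `m`-form `X` is a sum of `l` decomposable `m`-forms. -/
def AltLenLE (m l : ℕ) (X : V [⋀^Fin m]→ₗ[F] F) : Prop :=
  ∃ Y : Fin l → (V [⋀^Fin m]→ₗ[F] F), (∀ i, AltDec m (Y i)) ∧ X = ∑ i, Y i

/-- The `m`-form `X` has length `l`: it is a sum of `l` decomposable `m`-forms and of no
smaller number of them. -/
def AltHasLen (m l : ℕ) (X : V [⋀^Fin m]→ₗ[F] F) : Prop :=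
  AltLenLE m l X ∧ ∀ j < l, ¬ AltLenLE m j X

end AltMachinery

section CE

variable {F : Type*} [Field F] {g : Type*} [LieRing g] [LieAlgebra F g]

/-- The Chevalley–Eilenberg differential of a `(k+1)`-form (given as a function on tuples):
`(dρ)(x₀,…,x_{k+1}) = ∑_{i<j} (-1)^{i+j} ρ(⁅x_i,x_j⁆, x₀,…,x̂_i,…,x̂_j,…,x_{k+1})`. -/
noncomputable def ceDiff (k : ℕ) (ρ : (Fin (k + 1) → g) → F) : (Fin (k + 2) → g) → F :=
  fun x => ∑ i : Fin (k + 2), ∑ j : Fin (k + 2),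
    if h : (i : ℕ) < (j : ℕ) then
      (-1 : F) ^ ((i : ℕ) + (j : ℕ)) *
        ρ (Fin.cons ⁅x i, x j⁆ fun l : Fin k =>
            x (j.succAbove ((⟨(i : ℕ),
              Nat.lt_of_lt_of_le h (Nat.lt_succ_iff.mp j.isLt)⟩ : Fin (k + 1)).succAbove l)))
    else 0

end CE

section G2Forms

variable {F : Type*} [Field F] {g : Type*} [AddCommGroup g] [Module F g]

/-- The wedge `f^i ∧ f^j ∧ f^k ∧ f^l` of four covectors from the basis `b` of `g*`. -/
noncomputable def bw (b : Basis (Fin 7) F (Module.Dual F g)) (i j k l : Fin 7) :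
    g [⋀^Fin 4]→ₗ[F] F :=
  wedgeCov 4 ![b i, b j, b k, b l]

/-- The four-form `f^{1234}+f^{1256}+f^{3456}-f^{2467}+f^{2357}+f^{1457}+f^{1367}` (the
Hodge dual of a `G₂`- resp. `(G₂)_ℂ`-structure), written with `0`-based indices. -/
noncomputable def stdG2 (b : Basis (Fin 7) F (Module.Dual F g)) : g [⋀^Fin 4]→ₗ[F] F :=
  bw b 0 1 2 3 + bw b 0 1 4 5 + bw b 2 3 4 5 - bw b 1 3 5 6 +
    bw b 1 2 4 6 + bw b 0 3 4 6 + bw b 0 2 5 6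

/-- The four-form `f^{1234}-f^{1256}-f^{3456}-f^{2467}+f^{2357}+f^{1457}+f^{1367}` (the
Hodge dual of a `G₂*`-structure), written with `0`-based indices. -/
noncomputable def stdG2star (b : Basis (Fin 7) F (Module.Dual F g)) :
    g [⋀^Fin 4]→ₗ[F] F :=
  bw b 0 1 2 3 - bw b 0 1 4 5 - bw b 2 3 4 5 - bw b 1 3 5 6 +
    bw b 1 2 4 6 + bw b 0 3 4 6 + bw b 0 2 5 6

/-- Membership in `Λ⁴W ⊆ Λ⁴g*` for a subspace `W ⊆ g*`: the span of the wedges of four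
covectors from `W`. -/
def mem4Pow (W : Submodule F (Module.Dual F g)) (Ω : g [⋀^Fin 4]→ₗ[F] F) : Prop :=
  Ω ∈ Submodule.span F
    {Y : g [⋀^Fin 4]→ₗ[F] F |
      ∃ φ : Fin 4 → Module.Dual F g, (∀ i, φ i ∈ W) ∧ Y = wedgeCov 4 φ}

end G2Forms


section PartOne

variable {g : Type*} [LieRing g] [LieAlgebra ℂ g]

theorem ceDiff3_apply (ρ : (Fin 4 → g) → ℂ) (x : Fin 5 → g) :
    ceDiff 3 ρ x =
      - ρ ![⁅x 0, x 1⁆, x 2, x 3, x 4] + ρ ![⁅x 0, x 2⁆, x 1, x 3, x 4]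
      - ρ ![⁅x 0, x 3⁆, x 1, x 2, x 4] + ρ ![⁅x 0, x 4⁆, x 1, x 2, x 3]
      - ρ ![⁅x 1, x 2⁆, x 0, x 3, x 4] + ρ ![⁅x 1, x 3⁆, x 0, x 2, x 4]
      - ρ ![⁅x 1, x 4⁆, x 0, x 2, x 3] - ρ ![⁅x 2, x 3⁆, x 0, x 1, x 4]
      + ρ ![⁅x 2, x 4⁆, x 0, x 1, x 3] - ρ ![⁅x 3, x 4⁆, x 0, x 1, x 2] := by
  have key : ∀ (i j : Fin 5) (h : (i : ℕ) < (j : ℕ)) (a b c : Fin 5) (y : g),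
      (j.succAbove ((⟨(i : ℕ),
              Nat.lt_of_lt_of_le h (Nat.lt_succ_iff.mp j.isLt)⟩ : Fin 4).succAbove 0)) = a →
      (j.succAbove ((⟨(i : ℕ),
              Nat.lt_of_lt_of_le h (Nat.lt_succ_iff.mp j.isLt)⟩ : Fin 4).succAbove 1)) = b →
      (j.succAbove ((⟨(i : ℕ),
              Nat.lt_of_lt_of_le h (Nat.lt_succ_iff.mp j.isLt)⟩ : Fin 4).succAbove 2)) = c →
      (Fin.cons y fun l : Fin 3 =>
            x (j.succAbove ((⟨(i : ℕ),
              Nat.lt_of_lt_of_le h (Nat.lt_succ_iff.mp j.isLt)⟩ : Fin 4).succAbove l)) : Fin 4 → g)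
       = ![y, x a, x b, x c] := by
    intro i j h a b c y ha hb hc
    subst ha hb hc
    funext l
    fin_cases l <;> rfl
  have k01 := key 0 1 (by decide) 2 3 4 ⁅x 0, x 1⁆ (by decide) (by decide) (by decide)
  have k02 := key 0 2 (by decide) 1 3 4 ⁅x 0, x 2⁆ (by decide) (by decide) (by decide)
  have k03 := key 0 3 (by decide) 1 2 4 ⁅x 0, x 3⁆ (by decide) (by decide) (by decide)
  have k04 := key 0 4 (by decide) 1 2 3 ⁅x 0, x 4⁆ (by decide) (by decide) (by decide)
  have k12 := key 1 2 (by decide) 0 3 4 ⁅x 1, x 2⁆ (by decide) (by decide) (by decide)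
  have k13 := key 1 3 (by decide) 0 2 4 ⁅x 1, x 3⁆ (by decide) (by decide) (by decide)
  have k14 := key 1 4 (by decide) 0 2 3 ⁅x 1, x 4⁆ (by decide) (by decide) (by decide)
  have k23 := key 2 3 (by decide) 0 1 4 ⁅x 2, x 3⁆ (by decide) (by decide) (by decide)
  have k24 := key 2 4 (by decide) 0 1 3 ⁅x 2, x 4⁆ (by decide) (by decide) (by decide)
  have k34 := key 3 4 (by decide) 0 1 2 ⁅x 3, x 4⁆ (by decide) (by decide) (by decide)
  rw [← k01, ← k02, ← k03, ← k04, ← k12, ← k13, ← k14, ← k23, ← k24, ← k34]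
  unfold ceDiff
  have h5 : ∀ F : Fin 5 → ℂ, (∑ i : Fin (3 + 2), F i) = F 0 + F 1 + F 2 + F 3 + F 4 :=
    fun F => Fin.sum_univ_five F
  rw [h5, h5, h5, h5, h5, h5]
  simp
  ring

/-- explicit 4x4 determinant -/
theorem wedge4_apply (φ₀ φ₁ φ₂ φ₃ : Module.Dual ℂ g) (x y z w : g) :
    wedgeCov 4 ![φ₀, φ₁, φ₂, φ₃] ![x, y, z, w] =
      φ₀ x * (φ₁ y * (φ₂ z * φ₃ w - φ₂ w * φ₃ z) - φ₁ z * (φ₂ y * φ₃ w - φ₂ w * φ₃ y)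
        + φ₁ w * (φ₂ y * φ₃ z - φ₂ z * φ₃ y))
      - φ₀ y * (φ₁ x * (φ₂ z * φ₃ w - φ₂ w * φ₃ z) - φ₁ z * (φ₂ x * φ₃ w - φ₂ w * φ₃ x)
        + φ₁ w * (φ₂ x * φ₃ z - φ₂ z * φ₃ x))
      + φ₀ z * (φ₁ x * (φ₂ y * φ₃ w - φ₂ w * φ₃ y) - φ₁ y * (φ₂ x * φ₃ w - φ₂ w * φ₃ x)
        + φ₁ w * (φ₂ x * φ₃ y - φ₂ y * φ₃ x))
      - φ₀ w * (φ₁ x * (φ₂ y * φ₃ z - φ₂ z * φ₃ y) - φ₁ y * (φ₂ x * φ₃ z - φ₂ z * φ₃ x)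
        + φ₁ z * (φ₂ x * φ₃ y - φ₂ y * φ₃ x)) := by
  have : wedgeCov 4 ![φ₀, φ₁, φ₂, φ₃] ![x, y, z, w] =
    Matrix.det !![φ₀ x, φ₁ x, φ₂ x, φ₃ x; φ₀ y, φ₁ y, φ₂ y, φ₃ y;
      φ₀ z, φ₁ z, φ₂ z, φ₃ z; φ₀ w, φ₁ w, φ₂ w, φ₃ w] := by
    unfold wedgeCov
    simp only [AlternatingMap.compLinearMap_apply]
    show Matrix.det _ = Matrix.det _
    congr 1
    ext i j
    fin_cases i <;> fin_cases j <;> rfl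
  rw [this]
  simp [Matrix.det_succ_row_zero, Fin.sum_univ_succ, Fin.succAbove]
  ring

variable (ν : Module.Dual ℂ g) (D : g →ₗ[ℂ] g)

theorem ce_wedge_nu (hbr : ∀ x y : g, ⁅x, y⁆ = ν x • D y - ν y • D x) (hνD : ∀ x, ν (D x) = 0)
    (φ₁ φ₂ φ₃ : Module.Dual ℂ g) (x : Fin 5 → g) :
    ceDiff 3 ⇑(wedgeCov 4 ![ν, φ₁, φ₂, φ₃]) x = 0 := by
  rw [ceDiff3_apply]
  simp only [wedge4_apply, hbr, map_sub, map_smul, smul_eq_mul, hνD]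
  ring

theorem ce_wedge (hbr : ∀ x y : g, ⁅x, y⁆ = ν x • D y - ν y • D x)
    (Θ : g [⋀^Fin 4]→ₗ[ℂ] ℂ)
    (hΘ : ∀ x y z w, Θ ![D x, y, z, w] - Θ ![D y, x, z, w] + Θ ![D z, x, y, w]
      - Θ ![D w, x, y, z] = 0) (x : Fin 5 → g) :
    ceDiff 3 ⇑Θ x = 0 := by
  have hlin : ∀ (a b : ℂ) (x y p q r : g), Θ ![a • x - b • y, p, q, r] =
      a * Θ ![x, p, q, r] - b * Θ ![y, p, q, r] := by
    intro a b x y p q r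
    have h1 := Θ.toMultilinearMap.cons_add ![p, q, r] (a • x) (- b • y)
    have h2 := Θ.toMultilinearMap.cons_smul ![p, q, r] a x
    have h3 := Θ.toMultilinearMap.cons_smul ![p, q, r] (-b) y
    rw [h2, h3] at h1
    have h4 : a • x - b • y = a • x + -b • y := by module
    rw [h4]
    refine Eq.trans h1 ?_
    simp only [smul_eq_mul]
    rw [neg_mul, ← sub_eq_add_neg]
    rfl
  rw [ceDiff3_apply]
  simp only [hbr, hlin]
  linear_combination (- ν (x 0)) * hΘ (x 1) (x 2) (x 3) (x 4) + ν (x 1) * hΘ (x 0) (x 2) (x 3) (x 4) - ν (x 2) * hΘ (x 0) (x 1) (x 3) (x 4) + ν (x 3) * hΘ (x 0) (x 1) (x 2) (x 4) - ν (x 4) * hΘ (x 0) (x 1) (x 2) (x 3)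

end PartOne


section PartTwo

/-- The matrix of `ι_n φ`, `φ` the dual three-form. -/
def PhiM (n : Fin 7 → ℂ) : Matrix (Fin 7) (Fin 7) ℂ :=
  !![0, n 6, n 4, -n 5, -n 2, n 3, -n 1;
     -n 6, 0, -n 5, -n 4, n 3, n 2, n 0;
     -n 4, n 5, 0, n 6, n 0, -n 1, -n 3;
     n 5, n 4, -n 6, 0, -n 1, -n 0, n 2;
     n 2, -n 3, -n 0, n 1, 0, n 6, -n 5;
     -n 3, -n 2, n 1, n 0, -n 6, 0, n 4;
     n 1, -n 0, n 3, -n 2, n 5, -n 4, 0]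

theorem PhiM_transpose (n : Fin 7 → ℂ) : (PhiM n).transpose = - PhiM n := by
  ext i j
  fin_cases i <;> fin_cases j <;> simp [PhiM]

theorem skew_zero (X : Fin 7 → Fin 7 → ℂ) (hs : ∀ i j, X j i = - X i j)
    (h01 : X 0 1 = 0) (h02 : X 0 2 = 0) (h03 : X 0 3 = 0) (h04 : X 0 4 = 0) (h05 : X 0 5 = 0) (h06 : X 0 6 = 0)
    (h12 : X 1 2 = 0) (h13 : X 1 3 = 0) (h14 : X 1 4 = 0) (h15 : X 1 5 = 0) (h16 : X 1 6 = 0)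
    (h23 : X 2 3 = 0) (h24 : X 2 4 = 0) (h25 : X 2 5 = 0) (h26 : X 2 6 = 0)
    (h34 : X 3 4 = 0) (h35 : X 3 5 = 0) (h36 : X 3 6 = 0)
    (h45 : X 4 5 = 0) (h46 : X 4 6 = 0)
    (h56 : X 5 6 = 0)
    : ∀ i j, X i j = 0 := by
  have hd : ∀ i, X i i = 0 := fun i => by
    have := hs i i
    linear_combination this / 2
  have hlt : ∀ i j, i < j → X i j = 0 := by
    intro i j hij
    fin_cases i <;> fin_cases j <;> first | exact absurd hij (by decide) | assumption
  intro i j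
  rcases lt_trichotomy i j with h | h | h
  · exact hlt i j h
  · rw [h, hd]
  · rw [hs, hlt j i h, neg_zero]

variable {g : Type*} [LieRing g] [LieAlgebra ℂ g]

set_option maxHeartbeats 4000000 in
theorem closed_imp (ν : Module.Dual ℂ g) (D : g →ₗ[ℂ] g)
    (hbr : ∀ x y : g, ⁅x, y⁆ = ν x • D y - ν y • D x)
    (b : Basis (Fin 7) ℂ (Module.Dual ℂ g)) (e : Fin 7 → g)
    (he : ∀ i j, b i (e j) = if i = j then 1 else 0)
    (h : ceDiff 3 ⇑(stdG2 b) = 0) (n : Fin 7 → ℂ) (d : Matrix (Fin 7) (Fin 7) ℂ)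
    (hn : ∀ i, ν (e i) = n i) (hd : ∀ i j, b i (D (e j)) = d i j)
    (hnd : ∀ j, ∑ k, n k * d k j = 0) :
    d * PhiM n + PhiM n * d.transpose = d.trace • PhiM n := by
  obtain ⟨S, hS⟩ : ∃ S : g → Fin 7 → Fin 7 → Fin 7 → ℂ,
      ∀ x i j k, stdG2 b ![x, e i, e j, e k] = S x i j k := ⟨_, fun _ _ _ _ => rfl⟩
  have key : ∀ p q r s t : Fin 7,
      - S ⁅e p, e q⁆ r s t + S ⁅e p, e r⁆ q s t - S ⁅e p, e s⁆ q r t + S ⁅e p, e t⁆ q r s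
      - S ⁅e q, e r⁆ p s t + S ⁅e q, e s⁆ p r t - S ⁅e q, e t⁆ p r s - S ⁅e r, e s⁆ p q t
      + S ⁅e r, e t⁆ p q s - S ⁅e s, e t⁆ p q r = 0 := by
    intro p q r s t
    have h0 := congrFun h ![e p, e q, e r, e s, e t]
    rw [ceDiff3_apply] at h0
    simp only [← hS]
    exact h0
  have hb : ∀ i p q, b i ⁅e p, e q⁆ = n p * d i q - n q * d i p := by
    intro i p q
    rw [hbr, map_sub, map_smul, map_smul, hn, hn, hd, hd, smul_eq_mul, smul_eq_mul]
  have t012 : ∀ x, S x 0 1 2 = - b 3 x := fun x => by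
    simp [← hS, stdG2, bw, wedge4_apply, he]
  have t013 : ∀ x, S x 0 1 3 = b 2 x := fun x => by
    simp [← hS, stdG2, bw, wedge4_apply, he]
  have t014 : ∀ x, S x 0 1 4 = - b 5 x := fun x => by
    simp [← hS, stdG2, bw, wedge4_apply, he]
  have t015 : ∀ x, S x 0 1 5 = b 4 x := fun x => by
    simp [← hS, stdG2, bw, wedge4_apply, he]
  have t016 : ∀ x, S x 0 1 6 = 0 := fun x => by
    simp [← hS, stdG2, bw, wedge4_apply, he]
  have t023 : ∀ x, S x 0 2 3 = - b 1 x := fun x => by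
    simp [← hS, stdG2, bw, wedge4_apply, he]
  have t024 : ∀ x, S x 0 2 4 = 0 := fun x => by
    simp [← hS, stdG2, bw, wedge4_apply, he]
  have t025 : ∀ x, S x 0 2 5 = - b 6 x := fun x => by
    simp [← hS, stdG2, bw, wedge4_apply, he]
  have t026 : ∀ x, S x 0 2 6 = b 5 x := fun x => by
    simp [← hS, stdG2, bw, wedge4_apply, he]
  have t034 : ∀ x, S x 0 3 4 = - b 6 x := fun x => by
    simp [← hS, stdG2, bw, wedge4_apply, he]
  have t035 : ∀ x, S x 0 3 5 = 0 := fun x => by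
    simp [← hS, stdG2, bw, wedge4_apply, he]
  have t036 : ∀ x, S x 0 3 6 = b 4 x := fun x => by
    simp [← hS, stdG2, bw, wedge4_apply, he]
  have t045 : ∀ x, S x 0 4 5 = - b 1 x := fun x => by
    simp [← hS, stdG2, bw, wedge4_apply, he]
  have t046 : ∀ x, S x 0 4 6 = - b 3 x := fun x => by
    simp [← hS, stdG2, bw, wedge4_apply, he]
  have t056 : ∀ x, S x 0 5 6 = - b 2 x := fun x => by
    simp [← hS, stdG2, bw, wedge4_apply, he]
  have t123 : ∀ x, S x 1 2 3 = b 0 x := fun x => by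
    simp [← hS, stdG2, bw, wedge4_apply, he]
  have t124 : ∀ x, S x 1 2 4 = - b 6 x := fun x => by
    simp [← hS, stdG2, bw, wedge4_apply, he]
  have t125 : ∀ x, S x 1 2 5 = 0 := fun x => by
    simp [← hS, stdG2, bw, wedge4_apply, he]
  have t126 : ∀ x, S x 1 2 6 = b 4 x := fun x => by
    simp [← hS, stdG2, bw, wedge4_apply, he]
  have t134 : ∀ x, S x 1 3 4 = 0 := fun x => by
    simp [← hS, stdG2, bw, wedge4_apply, he]
  have t135 : ∀ x, S x 1 3 5 = b 6 x := fun x => by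
    simp [← hS, stdG2, bw, wedge4_apply, he]
  have t136 : ∀ x, S x 1 3 6 = - b 5 x := fun x => by
    simp [← hS, stdG2, bw, wedge4_apply, he]
  have t145 : ∀ x, S x 1 4 5 = b 0 x := fun x => by
    simp [← hS, stdG2, bw, wedge4_apply, he]
  have t146 : ∀ x, S x 1 4 6 = - b 2 x := fun x => by
    simp [← hS, stdG2, bw, wedge4_apply, he]
  have t156 : ∀ x, S x 1 5 6 = b 3 x := fun x => by
    simp [← hS, stdG2, bw, wedge4_apply, he]
  have t234 : ∀ x, S x 2 3 4 = - b 5 x := fun x => by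
    simp [← hS, stdG2, bw, wedge4_apply, he]
  have t235 : ∀ x, S x 2 3 5 = b 4 x := fun x => by
    simp [← hS, stdG2, bw, wedge4_apply, he]
  have t236 : ∀ x, S x 2 3 6 = 0 := fun x => by
    simp [← hS, stdG2, bw, wedge4_apply, he]
  have t245 : ∀ x, S x 2 4 5 = - b 3 x := fun x => by
    simp [← hS, stdG2, bw, wedge4_apply, he]
  have t246 : ∀ x, S x 2 4 6 = b 1 x := fun x => by
    simp [← hS, stdG2, bw, wedge4_apply, he]
  have t256 : ∀ x, S x 2 5 6 = b 0 x := fun x => by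
    simp [← hS, stdG2, bw, wedge4_apply, he]
  have t345 : ∀ x, S x 3 4 5 = b 2 x := fun x => by
    simp [← hS, stdG2, bw, wedge4_apply, he]
  have t346 : ∀ x, S x 3 4 6 = b 0 x := fun x => by
    simp [← hS, stdG2, bw, wedge4_apply, he]
  have t356 : ∀ x, S x 3 5 6 = - b 1 x := fun x => by
    simp [← hS, stdG2, bw, wedge4_apply, he]
  have t456 : ∀ x, S x 4 5 6 = 0 := fun x => by
    simp [← hS, stdG2, bw, wedge4_apply, he]
  have hX : ∀ i j, (d * PhiM n + PhiM n * d.transpose - d.trace • PhiM n) i j = 0 := by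
    apply skew_zero
    · intro i j
      have : (d * PhiM n + PhiM n * d.transpose - d.trace • PhiM n).transpose =
          - (d * PhiM n + PhiM n * d.transpose - d.trace • PhiM n) := by
        simp only [Matrix.transpose_sub, Matrix.transpose_add, Matrix.transpose_mul,
          Matrix.transpose_smul, PhiM_transpose, Matrix.transpose_transpose]
        simp only [mul_neg, neg_mul, smul_neg]
        abel
      exact congrFun (congrFun this i) j
    all_goals
      simp only [Matrix.sub_apply, Matrix.add_apply, Matrix.mul_apply, Matrix.smul_apply,
        Matrix.transpose_apply, Fin.sum_univ_seven, Matrix.trace, Matrix.diag, smul_eq_mul] at hnd ⊢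
      simp [PhiM]
    · have q := key 2 3 4 5 6
      simp only [t234, t235, t236, t245, t246, t256, t345, t346, t356, t456, hb] at q
      linear_combination q - hnd 6
    · have q := key 1 3 4 5 6
      simp only [t134, t135, t136, t145, t146, t156, t345, t346, t356, t456, hb] at q
      linear_combination -q - hnd 4
    · have q := key 1 2 4 5 6
      simp only [t124, t125, t126, t145, t146, t156, t245, t246, t256, t456, hb] at q
      linear_combination q + hnd 5
    · have q := key 1 2 3 5 6
      simp only [t123, t125, t126, t135, t136, t156, t235, t236, t256, t356, hb] at q
      linear_combination -q + hnd 2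
    · have q := key 1 2 3 4 6
      simp only [t123, t124, t126, t134, t136, t146, t234, t236, t246, t346, hb] at q
      linear_combination q - hnd 3
    · have q := key 1 2 3 4 5
      simp only [t123, t124, t125, t134, t135, t145, t234, t235, t245, t345, hb] at q
      linear_combination -q + hnd 1
    · have q := key 0 3 4 5 6
      simp only [t034, t035, t036, t045, t046, t056, t345, t346, t356, t456, hb] at q
      linear_combination q + hnd 5
    · have q := key 0 2 4 5 6
      simp only [t024, t025, t026, t045, t046, t056, t245, t246, t256, t456, hb] at q
      linear_combination -q + hnd 4
    · have q := key 0 2 3 5 6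
      simp only [t023, t025, t026, t035, t036, t056, t235, t236, t256, t356, hb] at q
      linear_combination q - hnd 3
    · have q := key 0 2 3 4 6
      simp only [t023, t024, t026, t034, t036, t046, t234, t236, t246, t346, hb] at q
      linear_combination -q - hnd 2
    · have q := key 0 2 3 4 5
      simp only [t023, t024, t025, t034, t035, t045, t234, t235, t245, t345, hb] at q
      linear_combination q - hnd 0
    · have q := key 0 1 4 5 6
      simp only [t014, t015, t016, t045, t046, t056, t145, t146, t156, t456, hb] at q
      linear_combination q - hnd 6
    · have q := key 0 1 3 5 6
      simp only [t013, t015, t016, t035, t036, t056, t135, t136, t156, t356, hb] at q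
      linear_combination -q - hnd 0
    · have q := key 0 1 3 4 6
      simp only [t013, t014, t016, t034, t036, t046, t134, t136, t146, t346, hb] at q
      linear_combination q + hnd 1
    · have q := key 0 1 3 4 5
      simp only [t013, t014, t015, t034, t035, t045, t134, t135, t145, t345, hb] at q
      linear_combination -q + hnd 3
    · have q := key 0 1 2 5 6
      simp only [t012, t015, t016, t025, t026, t056, t125, t126, t156, t256, hb] at q
      linear_combination q + hnd 1
    · have q := key 0 1 2 4 6
      simp only [t012, t014, t016, t024, t026, t046, t124, t126, t146, t246, hb] at q
      linear_combination -q + hnd 0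
    · have q := key 0 1 2 4 5
      simp only [t012, t014, t015, t024, t025, t045, t124, t125, t145, t245, hb] at q
      linear_combination q - hnd 2
    · have q := key 0 1 2 3 6
      simp only [t012, t013, t016, t023, t026, t036, t123, t126, t136, t236, hb] at q
      linear_combination q - hnd 6
    · have q := key 0 1 2 3 5
      simp only [t012, t013, t015, t023, t025, t035, t123, t125, t135, t235, hb] at q
      linear_combination -q + hnd 5
    · have q := key 0 1 2 3 4
      simp only [t012, t013, t014, t023, t024, t034, t123, t124, t134, t234, hb] at q
      linear_combination q - hnd 4
  ext i j
  have := hX i j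
  rw [Matrix.sub_apply, sub_eq_zero] at this
  exact this

end PartTwo


section PartThree

variable {E : Type*} [AddCommGroup E] [Module ℂ E]

/-- `ω` is symplectic on `W`, `A` preserves `W` and scales `ω|_W` infinitesimally by `t`. -/
def SympOn (A : E →ₗ[ℂ] E) (t : ℂ) (W : Submodule ℂ E) : Prop :=
  (∀ x ∈ W, A x ∈ W) ∧ ∃ ω : E →ₗ[ℂ] E →ₗ[ℂ] ℂ,
    (∀ x ∈ W, ω x x = 0) ∧ (∀ x ∈ W, (∀ y ∈ W, ω x y = 0) → x = 0) ∧
    ∀ x ∈ W, ∀ y ∈ W, ω (A x) y + ω x (A y) = t * ω x y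

theorem alt_skew {W : Submodule ℂ E} {ω : E →ₗ[ℂ] E →ₗ[ℂ] ℂ} (halt : ∀ x ∈ W, ω x x = 0)
    {x y : E} (hx : x ∈ W) (hy : y ∈ W) : ω x y = - ω y x := by
  have h := halt (x + y) (W.add_mem hx hy)
  simp only [map_add, LinearMap.add_apply, halt x hx, halt y hy] at h
  linear_combination h

theorem sympOn_of_skew {X : Type*} [AddCommGroup X] [Module ℂ X]
    (p : X →ₗ[ℂ] E →ₗ[ℂ] ℂ) (B : X →ₗ[ℂ] E) (D : E →ₗ[ℂ] E) (D' : X →ₗ[ℂ] X) (t : ℂ)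
    (hskew : ∀ x y, p x (B y) = - p y (B x)) (hsep : ∀ w, (∀ y, p y w = 0) → w = 0)
    (hD' : ∀ x w, p (D' x) w = p x (D w)) (hrel : ∀ x, D (B x) = t • B x - B (D' x)) :
    SympOn D t (LinearMap.range B) := by
  obtain ⟨s₀, hs₀⟩ := B.rangeRestrict.exists_rightInverse_of_surjective
    (LinearMap.range_rangeRestrict B)
  obtain ⟨s, hs⟩ := LinearMap.exists_extend s₀
  have hBs : ∀ w ∈ LinearMap.range B, B (s w) = w := by
    intro w hw
    have h1 : s w = s₀ ⟨w, hw⟩ := by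
      rw [← hs]; rfl
    have h2 := LinearMap.congr_fun hs₀ ⟨w, hw⟩
    have h3 := congrArg Subtype.val h2
    rw [h1]
    exact h3
  have hpB : ∀ w ∈ LinearMap.range B, ∀ y, p (s w) (B y) = - p y w := by
    intro w hw y
    rw [hskew, hBs w hw]
  have hinv : ∀ x ∈ LinearMap.range B, D x ∈ LinearMap.range B := by
    rintro _ ⟨x, rfl⟩
    rw [hrel]
    exact Submodule.sub_mem _ (Submodule.smul_mem _ _ ⟨x, rfl⟩) ⟨_, rfl⟩
  refine ⟨hinv, p ∘ₗ s, ?_, ?_, ?_⟩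
  · intro x hx
    have h1 := hskew (s x) (s x)
    rw [hBs x hx] at h1
    simp only [LinearMap.comp_apply]
    linear_combination h1 / 2
  · intro x hx h
    apply hsep
    intro y
    have := h (B y) ⟨y, rfl⟩
    rw [LinearMap.comp_apply, hpB x hx] at this
    linear_combination - this
  · rintro x hx _ ⟨y, rfl⟩
    simp only [LinearMap.comp_apply]
    rw [hpB _ (hinv x hx), hrel, map_sub, map_smul, hpB _ hx, hpB _ hx, hD', smul_eq_mul]
    ring

theorem sympOn_even [FiniteDimensional ℂ E] {A : E →ₗ[ℂ] E} {t : ℂ} {W : Submodule ℂ E}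
    (h : SympOn A t W) : Even (finrank ℂ W) := by
  obtain ⟨-, ω, halt, hnd, -⟩ := h
  let b := Module.finBasis ℂ W
  let M : Matrix (Fin (finrank ℂ W)) (Fin (finrank ℂ W)) ℂ :=
    Matrix.of fun i j => ω (b i) (b j)
  have hM : M.transpose = - M := by
    ext i j
    exact alt_skew halt (b j).2 (b i).2
  have hdet : M.det ≠ 0 := by
    intro h0
    obtain ⟨v, hv, hv2⟩ := Matrix.exists_vecMul_eq_zero_iff.2 h0
    apply hv
    have hz : (∑ i, v i • b i : W) = 0 := by
      apply Subtype.ext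
      apply hnd _ (Subtype.mem _)
      intro y hy
      have hy' : y = ((∑ j, (b.repr ⟨y, hy⟩ j) • b j : W) : E) := by
        rw [b.sum_repr]
      have hj : ∀ j, ω ((∑ i, v i • b i : W) : E) (b j) = 0 := by
        intro j
        have := congrFun hv2 j
        simp only [Matrix.vecMul, dotProduct, M, Matrix.of_apply] at this
        simp only [Submodule.coe_sum, Submodule.coe_smul, map_sum, map_smul,
          LinearMap.sum_apply, LinearMap.smul_apply, smul_eq_mul]
        exact this
      rw [hy']
      rw [Submodule.coe_sum _ (fun j => (b.repr ⟨y, hy⟩ j) • b j), map_sum]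
      apply Finset.sum_eq_zero
      intro j _
      rw [Submodule.coe_smul, map_smul, hj, smul_zero]
    have := Fintype.linearIndependent_iff.1 b.linearIndependent v hz
    funext i
    exact this i
  have h1 : M.det = (-1) ^ (finrank ℂ W) * M.det := by
    conv_lhs => rw [← Matrix.det_transpose, hM, Matrix.det_neg, Fintype.card_fin]
  by_contra hodd
  rw [Nat.not_even_iff_odd] at hodd
  rw [hodd.neg_one_pow] at h1
  apply hdet
  linear_combination h1 / 2

theorem symp_basis [FiniteDimensional ℂ E] {W : Submodule ℂ E} {ω : E →ₗ[ℂ] E →ₗ[ℂ] ℂ}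
    (halt : ∀ x ∈ W, ω x x = 0) (hnd : ∀ x ∈ W, (∀ y ∈ W, ω x y = 0) → x = 0)
    (h4 : finrank ℂ W = 4) :
    ∃ v : Fin 4 → E, (∀ i, v i ∈ W) ∧ LinearIndependent ℂ v ∧
      ω (v 0) (v 1) = 1 ∧ ω (v 2) (v 3) = 1 ∧ ω (v 0) (v 2) = 0 ∧ ω (v 0) (v 3) = 0 ∧
      ω (v 1) (v 2) = 0 ∧ ω (v 1) (v 3) = 0 := by
  have hex : ∀ x ∈ W, x ≠ 0 → ∃ y ∈ W, ω x y = 1 := by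
    intro x hx hx0
    by_contra hcon
    push Not at hcon
    apply hx0
    apply hnd x hx
    intro y hy
    by_contra hne
    apply hcon ((ω x y)⁻¹ • y) (W.smul_mem _ hy)
    rw [map_smul, smul_eq_mul, inv_mul_cancel₀ hne]
  have hW : W ≠ ⊥ := by
    rintro rfl
    simp at h4
  obtain ⟨v0, hv0, hv00⟩ := W.exists_mem_ne_zero_of_ne_bot hW
  obtain ⟨v1, hv1, h01⟩ := hex v0 hv0 hv00
  have h10 : ω v1 v0 = -1 := by rw [alt_skew halt hv1 hv0, h01]
  obtain ⟨v2, hv2, hv20, h02, h12⟩ : ∃ v2 ∈ W, v2 ≠ 0 ∧ ω v0 v2 = 0 ∧ ω v1 v2 = 0 := by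
    let F : W →ₗ[ℂ] ℂ × ℂ := (ω v0 ∘ₗ W.subtype).prod (ω v1 ∘ₗ W.subtype)
    have hk : LinearMap.ker F ≠ ⊥ := by
      apply LinearMap.ker_ne_bot_of_finrank_lt
      simp [h4]
    obtain ⟨x, hx, hx0⟩ := (LinearMap.ker F).exists_mem_ne_zero_of_ne_bot hk
    have hx' : F x = 0 := hx
    refine ⟨x, x.2, ?_, ?_, ?_⟩
    · exact fun h => hx0 (Subtype.ext h)
    · exact congrArg Prod.fst hx'
    · exact congrArg Prod.snd hx'
  obtain ⟨y, hy, h2y⟩ := hex v2 hv2 hv20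
  have h20 : ω v2 v0 = 0 := by rw [alt_skew halt hv2 hv0, h02, neg_zero]
  have h21 : ω v2 v1 = 0 := by rw [alt_skew halt hv2 hv1, h12, neg_zero]
  let v3 := y + ω v1 y • v0 - ω v0 y • v1
  have hv3 : v3 ∈ W := W.sub_mem (W.add_mem hy (W.smul_mem _ hv0)) (W.smul_mem _ hv1)
  have h03 : ω v0 v3 = 0 := by
    simp only [v3, map_sub, map_add, map_smul, smul_eq_mul, halt v0 hv0, h01]; ring
  have h13 : ω v1 v3 = 0 := by
    simp only [v3, map_sub, map_add, map_smul, smul_eq_mul, halt v1 hv1, h10]; ring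
  have h23 : ω v2 v3 = 1 := by
    simp only [v3, map_sub, map_add, map_smul, smul_eq_mul, h20, h21, h2y]; ring
  have h30 : ω v3 v0 = 0 := by rw [alt_skew halt hv3 hv0, h03, neg_zero]
  have h31 : ω v3 v1 = 0 := by rw [alt_skew halt hv3 hv1, h13, neg_zero]
  have h32 : ω v3 v2 = -1 := by rw [alt_skew halt hv3 hv2, h23]
  refine ⟨![v0, v1, v2, v3], ?_, ?_, h01, h23, h02, h03, h12, h13⟩
  · intro i
    fin_cases i <;> assumption
  · rw [Fintype.linearIndependent_iff]
    intro c hc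
    simp only [Fin.sum_univ_four, Matrix.cons_val] at hc
    have e0 := congrArg (ω v0) hc
    have e1 := congrArg (ω v1) hc
    have e2 := congrArg (ω v2) hc
    have e3 := congrArg (ω v3) hc
    simp only [map_add, map_smul, smul_eq_mul, halt v0 hv0, halt v1 hv1, halt v2 hv2,
      halt v3 hv3, h01, h02, h03, h10, h12, h13, h20, h21, h23, h30, h31, h32, map_zero,
      mul_zero, mul_one, add_zero, zero_add, mul_neg, neg_eq_zero] at e0 e1 e2 e3
    intro i
    fin_cases i
    · exact e1
    · exact e0
    · exact e3
    · exact e2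

theorem PhiM_null (n : Fin 7 → ℂ) (j : Fin 7) : ∑ i, n i * PhiM n i j = 0 := by
  rw [Fin.sum_univ_seven]
  fin_cases j <;> simp [PhiM] <;> ring

theorem PhiM_rank (n : Fin 7 → ℂ) (hn : n ≠ 0) : 4 ≤ (PhiM n).rank := by
  by_contra hlt
  have hdet : ∀ r : Fin 4 → Fin 7, ((PhiM n).submatrix r r).det = 0 := by
    intro r
    by_contra hne
    have h1 : IsUnit ((PhiM n).submatrix r r) :=
      (Matrix.isUnit_iff_isUnit_det _).2 (isUnit_iff_ne_zero.2 hne)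
    have h2 := Matrix.rank_of_isUnit _ h1
    have h3 := Matrix.rank_submatrix_le (PhiM n) r r
    rw [h2, Fintype.card_fin] at h3
    omega
  have det4 : ∀ a b c d e f : ℂ, Matrix.det
      !![0, a, b, c; -a, 0, d, e; -b, -d, 0, f; -c, -e, -f, 0] = (a * f - b * e + c * d) ^ 2 := by
    intro a b c d e f
    simp [Matrix.det_succ_row_zero, Fin.sum_univ_succ, Fin.succAbove]
    ring
  have pf : ∀ i j k l : Fin 7, PhiM n i j * PhiM n k l - PhiM n i k * PhiM n j l
      + PhiM n i l * PhiM n j k = 0 := by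
    intro i j k l
    have h := hdet ![i, j, k, l]
    have hT : ∀ a b, PhiM n a b = - PhiM n b a := fun a b => by
      have := congrFun (congrFun (PhiM_transpose n) b) a
      exact this
    have hD : ∀ a, PhiM n a a = 0 := fun a => by
      have := hT a a
      linear_combination this / 2
    have h' : (PhiM n).submatrix ![i, j, k, l] ![i, j, k, l] =
      !![0, PhiM n i j, PhiM n i k, PhiM n i l; - PhiM n i j, 0, PhiM n j k, PhiM n j l;
        - PhiM n i k, - PhiM n j k, 0, PhiM n k l; - PhiM n i l, - PhiM n j l, - PhiM n k l, 0] := by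
      ext a b
      fin_cases a <;> fin_cases b <;> simp [hD] <;> exact hT _ _
    rw [h', det4] at h
    exact pow_eq_zero_iff (two_ne_zero) |>.1 h
  have p1 := pf 0 1 2 3
  have p2 := pf 0 1 4 5
  have p3 := pf 2 3 4 5
  have p4 := pf 1 3 5 6
  have p5 := pf 1 2 4 6
  have p6 := pf 0 3 4 6
  have p7 := pf 0 2 5 6
  simp [PhiM] at p1 p2 p3 p4 p5 p6 p7
  apply hn
  have sq : ∀ z : ℂ, z ^ 2 = 0 → z = 0 := fun z h => pow_eq_zero_iff (two_ne_zero) |>.1 h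
  funext i
  apply sq
  have hall : n 0 * n 0 + n 1 * n 1 + n 2 * n 2 + n 3 * n 3 + n 4 * n 4 + n 5 * n 5 + n 6 * n 6 = 0 := by
    linear_combination (p1 + p2 + p3 - p4 + p5 + p6 + p7) / 3
  fin_cases i
  · show n 0 ^ 2 = 0
    linear_combination (p3 - p4 + p5 - hall) / 2
  · show n 1 ^ 2 = 0
    linear_combination (p3 + p6 + p7 - hall) / 2
  · show n 2 ^ 2 = 0
    linear_combination (p2 - p4 + p6 - hall) / 2
  · show n 3 ^ 2 = 0
    linear_combination (p2 + p5 + p7 - hall) / 2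
  · show n 4 ^ 2 = 0
    linear_combination (p1 - p4 + p7 - hall) / 2
  · show n 5 ^ 2 = 0
    linear_combination (p1 + p5 + p6 - hall) / 2
  · show n 6 ^ 2 = 0
    linear_combination (p1 + p2 + p3 - hall) / 2

end PartThree


section PartFour

variable {E : Type*} [AddCommGroup E] [Module ℂ E] [FiniteDimensional ℂ E]

theorem trace_of_symp (hE : finrank ℂ E = 6) (A : E →ₗ[ℂ] E) (t : ℂ)
    (ω : LinearMap.BilinForm ℂ E) (hω : ω.Nondegenerate)
    (hA : ∀ x y, ω (A x) y + ω x (A y) = t * ω x y) :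
    LinearMap.trace ℂ E A = 3 * t := by
  let b : Basis (Fin 6) ℂ E := Module.finBasisOfFinrankEq ℂ E hE
  let a := LinearMap.toMatrix b b A
  let M := LinearMap.BilinForm.toMatrix b ω
  have hdet : M.det ≠ 0 := (LinearMap.BilinForm.nondegenerate_iff_det_ne_zero b).1 hω
  have hrel : a.transpose * M + M * a = t • M := by
    ext i j
    have h := hA (b i) (b j)
    have hAi : ∀ k, A (b k) = ∑ l, a l k • b l := by
      intro k
      conv_lhs => rw [← b.sum_repr (A (b k))]
      simp [a, LinearMap.toMatrix_apply]
    rw [hAi, hAi] at h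
    simp only [map_sum, map_smul, LinearMap.sum_apply, LinearMap.smul_apply, smul_eq_mul] at h
    simp only [Matrix.add_apply, Matrix.mul_apply, Matrix.transpose_apply, Matrix.smul_apply,
      smul_eq_mul, M, LinearMap.BilinForm.toMatrix_apply]
    rw [← h]
    congr 1
    exact Finset.sum_congr rfl fun l _ => mul_comm _ _
  have hu : IsUnit M.det := isUnit_iff_ne_zero.2 hdet
  have h2 := congrArg (fun N => Matrix.trace (M⁻¹ * N)) hrel
  simp only [mul_add, Matrix.trace_add, Matrix.mul_smul, Matrix.trace_smul] at h2
  rw [← Matrix.mul_assoc M⁻¹ M a, Matrix.nonsing_inv_mul _ hu, Matrix.one_mul,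
    Matrix.trace_mul_comm, Matrix.mul_assoc, Matrix.mul_nonsing_inv _ hu, Matrix.mul_one,
    Matrix.trace_transpose, Matrix.trace_one, Fintype.card_fin, smul_eq_mul] at h2
  rw [LinearMap.trace_eq_matrix_trace ℂ b A]
  show Matrix.trace a = _
  push_cast at h2
  linear_combination h2 / 2

theorem exists_of_q (hE : finrank ℂ E = 6) (A : E →ₗ[ℂ] E) (ω : LinearMap.BilinForm ℂ E)
    (hω : ω.Nondegenerate) (halt : ∀ x, ω x x = 0) (hsk : ∀ x y, ω x y = - ω y x)
    (hA : ∀ x y, ω (A x) y = - ω x (A y)) (q : E →ₗ[ℂ] E)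
    (hq : ∀ x y, ω (q x) y = ω x (q y)) (hqA : ∀ x, q (A x) = A (q x))
    (hk : finrank ℂ (LinearMap.ker q) ≤ 3) (x₀ : E) (hx₀ : x₀ ≠ 0) (hqx : q x₀ = 0) :
    ∃ W : Submodule ℂ E, finrank ℂ W = 4 ∧ SympOn A 0 W := by
  have h := sympOn_of_skew (ω : E →ₗ[ℂ] E →ₗ[ℂ] ℂ) q A (-A) 0
    (fun x y => by rw [hsk, hq]) (fun w hw => hω.2 w hw)
    (fun x w => by rw [LinearMap.neg_apply, map_neg, LinearMap.neg_apply, hA, neg_neg])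
    (fun x => by rw [LinearMap.neg_apply, map_neg, hqA]; simp)
  refine ⟨_, ?_, h⟩
  have hev := sympOn_even h
  have hrn := LinearMap.finrank_range_add_finrank_ker q
  have hpos : 0 < finrank ℂ (LinearMap.ker q) := by
    rw [Module.finrank_pos_iff_exists_ne_zero]
    exact ⟨⟨x₀, hqx⟩, fun h => hx₀ (congrArg Subtype.val h)⟩
  obtain ⟨k, hk2⟩ := hev
  omega

theorem exists_of_plane (hE : finrank ℂ E = 6) (A : E →ₗ[ℂ] E) (ω : LinearMap.BilinForm ℂ E)
    (hω : ω.Nondegenerate) (halt : ∀ x, ω x x = 0) (hsk : ∀ x y, ω x y = - ω y x)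
    (hA : ∀ x y, ω (A x) y = - ω x (A y)) (x y : E) (a b c d : ℂ) (hxy : ω x y ≠ 0)
    (hx : A x = a • x + b • y) (hy : A y = c • x + d • y) :
    ∃ W : Submodule ℂ E, finrank ℂ W = 4 ∧ SympOn A 0 W := by
  let q : E →ₗ[ℂ] E := LinearMap.id -
    (ω x y)⁻¹ • ((ω x).smulRight y - (ω y).smulRight x)
  have hqz : ∀ z, q z = z - (ω x y)⁻¹ • (ω x z • y - ω y z • x) := fun z => by
    simp [q]
  have had : a + d = 0 := by
    have h1 := hA x y
    rw [hx, hy] at h1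
    simp only [map_add, map_smul, LinearMap.add_apply, LinearMap.smul_apply, halt,
      smul_eq_mul] at h1
    have : (a + d) * ω x y = 0 := by linear_combination h1
    exact (mul_eq_zero.1 this).resolve_right hxy
  have hyx : ω y x = - ω x y := hsk _ _
  refine exists_of_q hE A ω hω halt hsk hA q ?_ ?_ ?_ x ?_ ?_
  · intro z w
    rw [hqz, hqz]
    simp only [map_sub, map_smul, LinearMap.sub_apply, LinearMap.smul_apply, smul_eq_mul]
    rw [hsk z x, hsk z y]
    ring
  · intro z
    rw [hqz, hqz]
    have h1 : ω x (A z) = - (a * ω x z + b * ω y z) := by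
      have := hA x z
      rw [hx] at this
      simp only [map_add, map_smul, LinearMap.add_apply, LinearMap.smul_apply,
        smul_eq_mul] at this
      linear_combination this
    have h2 : ω y (A z) = - (c * ω x z + d * ω y z) := by
      have := hA y z
      rw [hy] at this
      simp only [map_add, map_smul, LinearMap.add_apply, LinearMap.smul_apply,
        smul_eq_mul] at this
      linear_combination this
    have hd : d = - a := by linear_combination had
    rw [h1, h2]
    simp only [map_sub, map_smul, hx, hy, hd]
    module
  · classical
    have hle : LinearMap.ker q ≤ Submodule.span ℂ ({x, y} : Finset E) := by
      intro z hz
      have hz' : q z = 0 := hz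
      rw [hqz, sub_eq_zero] at hz'
      rw [hz']
      apply Submodule.smul_mem
      apply Submodule.sub_mem
      · exact Submodule.smul_mem _ _ (Submodule.subset_span (by simp))
      · exact Submodule.smul_mem _ _ (Submodule.subset_span (by simp))
    have h1 := Submodule.finrank_mono hle
    have h2 := finrank_span_finset_le_card (R := ℂ) ({x, y} : Finset E)
    have h3 : ({x, y} : Finset E).card ≤ 2 := Finset.card_le_two
    have h4 : Set.finrank ℂ (({x, y} : Finset E) : Set E) = finrank ℂ (Submodule.span ℂ (({x, y} : Finset E) : Set E)) := rfl
    omega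
  · rintro rfl
    simp at hxy
  · rw [hqz, halt, hyx, neg_smul, sub_neg_eq_add, zero_smul, zero_add, smul_smul,
      inv_mul_cancel₀ hxy, one_smul, sub_self]

theorem exists_of_cube (hE : finrank ℂ E = 6) (A : E →ₗ[ℂ] E) (ω : LinearMap.BilinForm ℂ E)
    (hω : ω.Nondegenerate) (halt : ∀ x, ω x x = 0) (hsk : ∀ x y, ω x y = - ω y x)
    (hA : ∀ x y, ω (A x) y = - ω x (A y)) (hk : finrank ℂ (LinearMap.ker A) = 2)
    (hkr : LinearMap.ker A = LinearMap.range (A ∘ₗ A)) :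
    ∃ W : Submodule ℂ E, finrank ℂ W = 4 ∧ SympOn A 0 W := by
  let β : Basis (Fin 2) ℂ (LinearMap.ker A) := Module.finBasisOfFinrankEq ℂ _ hk
  have hz : ∀ i, ∃ z, A (A z) = β i := by
    intro i
    exact hkr.le (β i).2
  choose z hz using hz
  have hβ : ∀ x ∈ LinearMap.ker A, ∃ c₀ c₁ : ℂ, x = c₀ • A (A (z 0)) + c₁ • A (A (z 1)) := by
    intro x hx
    refine ⟨β.repr ⟨x, hx⟩ 0, β.repr ⟨x, hx⟩ 1, ?_⟩
    have := congrArg Subtype.val (β.sum_repr ⟨x, hx⟩)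
    rw [Fin.sum_univ_two] at this
    rw [hz, hz]
    exact this.symm
  have hli : ∀ c₀ c₁ : ℂ, c₀ • A (A (z 0)) + c₁ • A (A (z 1)) = 0 → c₀ = 0 ∧ c₁ = 0 := by
    intro c₀ c₁ h
    have h1 := Fintype.linearIndependent_iff.1 β.linearIndependent ![c₀, c₁] (by
      apply Subtype.ext
      rw [Fin.sum_univ_two]
      rw [hz, hz] at h
      exact h)
    exact ⟨h1 0, h1 1⟩
  have h3 : ∀ x, A (A (A x)) = 0 := by
    intro x
    have : A (A x) ∈ LinearMap.ker A := by rw [hkr]; exact ⟨x, rfl⟩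
    exact this
  obtain ⟨z0, hz0⟩ : ∃ w, w = z 0 := ⟨_, rfl⟩
  obtain ⟨z1, hz1⟩ : ∃ w, w = z 1 := ⟨_, rfl⟩
  rw [← hz0, ← hz1] at hβ hli
  let q : E →ₗ[ℂ] E := (ω (A (A z0))).smulRight (A z1) - (ω (A z1)).smulRight (A (A z0))
    + (ω (A (A z1))).smulRight (A z0) - (ω (A z0)).smulRight (A (A z1))
  have hqx : ∀ x, q x = ω (A (A z0)) x • (A z1) - ω (A z1) x • (A (A z0))
    + ω (A (A z1)) x • (A z0) - ω (A z0) x • (A (A z1)) := fun x => by simp [q]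
  have hAb : ∀ w x, ω (A (A w)) (A x) = 0 := by
    intro w x
    have := hA (A (A w)) x
    rw [h3, map_zero, LinearMap.zero_apply] at this
    linear_combination this
  have hAa : ∀ w x, ω (A w) (A x) = - ω (A (A w)) x := by
    intro w x
    rw [hA (A w) x, neg_neg]
  refine exists_of_q hE A ω hω halt hsk hA q ?_ ?_ ?_ (A (A z0)) ?_ ?_
  · intro x y
    rw [hqx, hqx]
    simp only [map_sub, map_add, map_smul, LinearMap.sub_apply, LinearMap.add_apply,
      LinearMap.smul_apply, smul_eq_mul]
    rw [hsk x (A z1), hsk x (A z0), hsk x (A (A z0)), hsk x (A (A z1))]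
    ring
  · intro x
    rw [hqx, hqx]
    simp only [map_sub, map_add, map_smul, h3, hAb, hAa]
    module
  · refine le_trans (Submodule.finrank_mono (t := LinearMap.ker A) ?_) (by omega)
    intro x hx
    have hx' : q x = 0 := hx
    have h4 := congrArg A hx'
    rw [hqx] at h4 hx'
    simp only [map_sub, map_add, map_smul, h3, smul_zero, sub_zero, map_zero] at h4
    obtain ⟨e1, e2⟩ := hli (ω (A (A z1)) x) (ω (A (A z0)) x) (by rw [← h4]; abel)
    rw [e1, e2] at hx'
    obtain ⟨e3, e4⟩ := hli (- ω (A z1) x) (- ω (A z0) x) (by rw [← hx']; module)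
    have key : ∀ y, ω (A y) x = 0 := by
      intro y
      obtain ⟨c0, c1, hc⟩ := hβ (A (A y)) (h3 y)
      obtain ⟨d0, d1, hd⟩ := hβ (A (y - c0 • z0 - c1 • z1)) (by
        show A (A _) = 0
        simp only [map_sub, map_smul, hc]
        abel)
      have : A y = c0 • A z0 + c1 • A z1 + (d0 • A (A z0) + d1 • A (A z1)) := by
        rw [← hd]
        simp only [map_sub, map_smul]
        abel
      rw [this]
      simp only [map_add, map_smul, LinearMap.add_apply, LinearMap.smul_apply, smul_eq_mul, e1, e2]
      linear_combination - c0 * e4 - c1 * e3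
    show A x = 0
    apply hω.2
    intro y
    have := hA y x
    rw [key] at this
    linear_combination this
  · intro h0
    have := (hli 1 0 (by rw [h0]; simp)).1
    exact one_ne_zero this
  · rw [hqx]
    simp only [hAb, hAa, h3, map_zero, LinearMap.zero_apply]
    simp

theorem exists_of_sp (hE : finrank ℂ E = 6) (A : E →ₗ[ℂ] E) (ω : LinearMap.BilinForm ℂ E)
    (hω : ω.Nondegenerate) (halt : ∀ x, ω x x = 0) (hsk : ∀ x y, ω x y = - ω y x)
    (hA : ∀ x y, ω (A x) y = - ω x (A y)) :
    ∃ W : Submodule ℂ E, finrank ℂ W = 4 ∧ SympOn A 0 W := by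
  by_contra hno
  have hplane : ∀ (x y : E) (a b c d : ℂ), A x = a • x + b • y → A y = c • x + d • y →
      ω x y = 0 := by
    intro x y a b c d hx hy
    by_contra hne
    exact hno (exists_of_plane hE A ω hω halt hsk hA x y a b c d hne hx hy)
  have : Nontrivial E := Module.nontrivial_of_finrank_pos (R := ℂ) (by omega)
  obtain ⟨μ, hμ⟩ := Module.End.exists_eigenvalue (A ∘ₗ A : Module.End ℂ E)
  obtain ⟨x₀, hx₀⟩ := hμ.exists_hasEigenvector
  have hx₀1 : A (A x₀) = μ • x₀ := hx₀.apply_eq_smul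
  have hx₀2 : x₀ ≠ 0 := hx₀.2
  let q : E →ₗ[ℂ] E := A ∘ₗ A - μ • LinearMap.id
  have hqx : ∀ x, q x = A (A x) - μ • x := fun x => by simp [q]
  have hq : ∀ x y, ω (q x) y = ω x (q y) := by
    intro x y
    rw [hqx, hqx]
    simp only [map_sub, map_smul, LinearMap.sub_apply, LinearMap.smul_apply, hA]
    ring
  have hqA : ∀ x, q (A x) = A (q x) := by
    intro x; rw [hqx, hqx, map_sub, map_smul]
  have hqx₀ : q x₀ = 0 := by rw [hqx, hx₀1, sub_self]
  have hK4 : 4 ≤ finrank ℂ (LinearMap.ker q) := by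
    by_contra hlt
    exact hno (exists_of_q hE A ω hω halt hsk hA q hq hqA (by omega) x₀ hx₀2 hqx₀)
  have hKA : ∀ x ∈ LinearMap.ker q, A (A x) = μ • x := by
    intro x hx
    have : q x = 0 := hx
    rw [hqx, sub_eq_zero] at this
    exact this
  have hK1 : ∀ x ∈ LinearMap.ker q, ω x (A x) = 0 := by
    intro x hx
    exact hplane x (A x) 0 1 μ 0 (by simp) (by simp [hKA x hx])
  have hK2 : ∀ x ∈ LinearMap.ker q, ∀ y ∈ LinearMap.ker q, ω x (A y) = 0 := by
    intro x hx y hy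
    have h1 := hK1 (x + y) (Submodule.add_mem _ hx hy)
    simp only [map_add, LinearMap.add_apply, hK1 x hx, hK1 y hy] at h1
    have h2 := hA y x
    have h3 := hsk (A y) x
    linear_combination h1 / 2 - h2 / 2 + h3 / 2
  -- orthogonal complements of kernels
  have horth : ∀ (L : E →ₗ[ℂ] E) (s : ℂ), (∀ x y, ω (L x) y = s * ω x (L y)) → s ≠ 0 →
      ω.orthogonal (LinearMap.ker L) = LinearMap.range L := by
    intro L s hL hs
    symm
    apply Submodule.eq_of_le_of_finrank_le
    · rintro _ ⟨y, rfl⟩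
      rw [LinearMap.BilinForm.mem_orthogonal_iff]
      intro x hx
      have h1 := hL x y
      have h2 : L x = 0 := hx
      rw [h2, map_zero, LinearMap.zero_apply] at h1
      have := (mul_eq_zero.1 h1.symm).resolve_left hs
      exact this
    · have h1 := LinearMap.BilinForm.finrank_orthogonal hω (LinearMap.ker L)
      have h2 := LinearMap.finrank_range_add_finrank_ker L
      omega
  by_cases hμ0 : μ = 0
  · have hq0 : q = A ∘ₗ A := by
      ext x; rw [hqx, hμ0, zero_smul, sub_zero]; rfl
    have hkk : ∀ x ∈ LinearMap.ker A, ∀ y ∈ LinearMap.ker A, ω x y = 0 := by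
      intro x hx y hy
      have hx' : A x = 0 := hx
      have hy' : A y = 0 := hy
      exact hplane x y 0 0 0 0 (by simp [hx']) (by simp [hy'])
    have hsub : LinearMap.ker A ≤ LinearMap.range q := by
      intro v hv
      have h1 : v ∈ ω.orthogonal (LinearMap.ker A) := fun n hn => hkk n hn v hv
      rw [horth A (-1) (fun x y => by rw [hA]; ring) (by norm_num)] at h1
      obtain ⟨w, rfl⟩ := h1
      have hw : w ∈ LinearMap.ker q := by
        rw [hq0]; exact hv
      rw [← horth q 1 (fun x y => by rw [hq]; ring) one_ne_zero]
      intro n hn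
      exact hK2 n hn w hw
    have hr := LinearMap.finrank_range_add_finrank_ker q
    have hle := Submodule.finrank_mono hsub
    have hK' : finrank ℂ (LinearMap.ker q) ≤ 2 * finrank ℂ (LinearMap.ker A) := by
      have h1 := LinearMap.finrank_range_add_finrank_ker (A.domRestrict (LinearMap.ker q))
      have h2 : finrank ℂ (LinearMap.range (A.domRestrict (LinearMap.ker q))) ≤
          finrank ℂ (LinearMap.ker A) := by
        apply Submodule.finrank_mono
        rintro _ ⟨⟨x, hx⟩, rfl⟩
        have := hKA x hx
        rw [hμ0, zero_smul] at this
        exact this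
      have h3 : finrank ℂ (LinearMap.ker (A.domRestrict (LinearMap.ker q))) ≤
          finrank ℂ (LinearMap.ker A) := by
        have e : LinearMap.ker (A.domRestrict (LinearMap.ker q)) =
          (LinearMap.ker A).comap (LinearMap.ker q).subtype := rfl
        rw [e, ← Submodule.finrank_map_subtype_eq]
        apply Submodule.finrank_mono
        exact Submodule.map_comap_le _ _
      omega
    refine hno (exists_of_cube hE A ω hω halt hsk hA (by omega) ?_)
    rw [← hq0]
    exact Submodule.eq_of_le_of_finrank_le hsub (by omega)
  · have hiso : ∀ x ∈ LinearMap.ker q, ∀ y ∈ LinearMap.ker q, ω x y = 0 := by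
      intro x hx y hy
      have hAy : A y ∈ LinearMap.ker q := by
        show q (A y) = 0
        rw [hqA]
        have : q y = 0 := hy
        rw [this, map_zero]
      have h1 := hK2 x hx (A y) hAy
      rw [hKA y hy, map_smul, smul_eq_mul] at h1
      exact (mul_eq_zero.1 h1).resolve_left hμ0
    have hle : LinearMap.ker q ≤ ω.orthogonal (LinearMap.ker q) :=
      fun y hy x hx => hiso x hx y hy
    have h1 := Submodule.finrank_mono hle
    rw [LinearMap.BilinForm.finrank_orthogonal hω] at h1
    omega

theorem sympOn_four (hE : finrank ℂ E = 6) (A : E →ₗ[ℂ] E) (W : Submodule ℂ E)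
    (h : SympOn A (LinearMap.trace ℂ E A) W) (hW : 4 ≤ finrank ℂ W) :
    ∃ W' : Submodule ℂ E, finrank ℂ W' = 4 ∧ SympOn A (LinearMap.trace ℂ E A) W' := by
  obtain ⟨k, hk⟩ := sympOn_even h
  have hle := Submodule.finrank_le W
  rw [hE] at hle
  have hcases : finrank ℂ W = 4 ∨ finrank ℂ W = 6 := by omega
  rcases hcases with h4 | h6
  · exact ⟨W, h4, h⟩
  · have hT : W = ⊤ := Submodule.eq_top_of_finrank_eq (by omega)
    subst hT
    obtain ⟨-, ω, halt, hnd, hrel⟩ := h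
    have halt' : ∀ x, ω x x = 0 := fun x => halt x trivial
    have hsk : ∀ x y, ω x y = - ω y x := fun x y => alt_skew halt trivial trivial
    have hω : (ω : LinearMap.BilinForm ℂ E).Nondegenerate := by
      constructor
      · intro x hx
        exact hnd x trivial fun y _ => hx y
      · intro x hx
        exact hnd x trivial fun y _ => by rw [hsk, hx y, neg_zero]
    have h3 := trace_of_symp hE A _ ω hω (fun x y => hrel x trivial y trivial)
    have h0 : LinearMap.trace ℂ E A = 0 := by linear_combination - h3 / 2
    rw [h0] at hrel ⊢
    exact exists_of_sp hE A ω hω halt' hsk (fun x y => by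
      have := hrel x trivial y trivial
      linear_combination this)

end PartFour


section PartFive

set_option linter.unusedSectionVars false

variable {E : Type*} [AddCommGroup E] [Module ℂ E] [FiniteDimensional ℂ E]

/-- the linear conditions on the matrix of `ad(e₇)` in an adapted basis -/
def QEq (M : Fin 6 → Fin 6 → ℂ) : Prop :=
  (∀ j : Fin 6, (j : ℕ) < 4 → M 4 j = 0 ∧ M 5 j = 0) ∧
  M 0 0 + M 1 1 = -(M 4 4 + M 5 5) ∧ M 2 2 + M 3 3 = -(M 4 4 + M 5 5) ∧
  M 1 2 = M 3 0 ∧ M 2 0 + M 1 3 = 0 ∧ M 3 1 + M 0 2 = 0 ∧ M 2 1 = M 0 3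

/-- normal form -/
def QForm (A : E →ₗ[ℂ] E) : Prop :=
  ∃ a : Basis (Fin 6) ℂ E, ∃ M : Fin 6 → Fin 6 → ℂ,
    (∀ j, A (a j) = ∑ i, M i j • a i) ∧ QEq M

/-- standard symplectic matrix -/
def JM : Fin 4 → Fin 4 → ℂ := ![![0, 1, 0, 0], ![-1, 0, 0, 0], ![0, 0, 0, 1], ![0, 0, -1, 0]]

theorem JM_of {W : Submodule ℂ E} {ω : E →ₗ[ℂ] E →ₗ[ℂ] ℂ}
    (halt : ∀ x ∈ W, ω x x = 0) (v : Fin 4 → E) (hv : ∀ i, v i ∈ W)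
    (h : ω (v 0) (v 1) = 1 ∧ ω (v 2) (v 3) = 1 ∧ ω (v 0) (v 2) = 0 ∧ ω (v 0) (v 3) = 0 ∧
      ω (v 1) (v 2) = 0 ∧ ω (v 1) (v 3) = 0) (i j : Fin 4) : ω (v i) (v j) = JM i j := by
  obtain ⟨h1, h2, h3, h4, h5, h6⟩ := h
  have hs : ∀ i j, ω (v i) (v j) = - ω (v j) (v i) := fun i j => alt_skew halt (hv i) (hv j)
  have h0 : ∀ i, ω (v i) (v i) = 0 := fun i => halt _ (hv i)
  have k1 := hs 1 0
  have k2 := hs 2 0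
  have k3 := hs 3 0
  have k4 := hs 2 1
  have k5 := hs 3 1
  have k6 := hs 3 2
  rw [h1] at k1; rw [h3] at k2; rw [h4] at k3; rw [h5] at k4; rw [h6] at k5; rw [h2] at k6
  fin_cases i <;> fin_cases j <;> simp [JM, h0, h1, h2, h3, h4, h5, h6, k1, k2, k3, k4, k5, k6]

theorem concat_basis (hE : finrank ℂ E = 6) (W W' : Submodule ℂ E) (hd : Disjoint W W')
    (v : Fin 4 → E) (w : Fin 2 → E) (hv : ∀ i, v i ∈ W) (hw : ∀ i, w i ∈ W')
    (hvi : LinearIndependent ℂ v) (hwi : LinearIndependent ℂ w) :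
    ∃ a : Basis (Fin 6) ℂ E, a 0 = v 0 ∧ a 1 = v 1 ∧ a 2 = v 2 ∧ a 3 = v 3 ∧
      a 4 = w 0 ∧ a 5 = w 1 := by
  have hli : LinearIndependent ℂ ![v 0, v 1, v 2, v 3, w 0, w 1] := by
    rw [Fintype.linearIndependent_iff]
    intro c hc
    rw [Fin.sum_univ_six] at hc
    have hc' : (c 0 • v 0 + c 1 • v 1 + c 2 • v 2 + c 3 • v 3) + (c 4 • w 0 + c 5 • w 1) = 0 := by
      rw [← hc]; simp [add_assoc]
    have m1 : c 0 • v 0 + c 1 • v 1 + c 2 • v 2 + c 3 • v 3 ∈ W :=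
      W.add_mem (W.add_mem (W.add_mem (W.smul_mem _ (hv _)) (W.smul_mem _ (hv _)))
        (W.smul_mem _ (hv _))) (W.smul_mem _ (hv _))
    have m2 : c 4 • w 0 + c 5 • w 1 ∈ W' :=
      W'.add_mem (W'.smul_mem _ (hw _)) (W'.smul_mem _ (hw _))
    have z1 : c 0 • v 0 + c 1 • v 1 + c 2 • v 2 + c 3 • v 3 = 0 := by
      apply Submodule.disjoint_def.1 hd _ m1
      rw [eq_neg_of_add_eq_zero_left hc']
      exact W'.neg_mem m2
    have z2 : c 4 • w 0 + c 5 • w 1 = 0 := by rw [z1, zero_add] at hc'; exact hc'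
    have r1 := Fintype.linearIndependent_iff.1 hvi ![c 0, c 1, c 2, c 3]
      (by rw [Fin.sum_univ_four]; exact z1)
    have r2 := Fintype.linearIndependent_iff.1 hwi ![c 4, c 5]
      (by rw [Fin.sum_univ_two]; exact z2)
    intro i
    fin_cases i
    exacts [r1 0, r1 1, r1 2, r1 3, r2 0, r2 1]
  refine ⟨basisOfLinearIndependentOfCardEqFinrank hli (by simp [hE]), ?_⟩
  simp

theorem coord_zero (a : Basis (Fin 6) ℂ E) (W W' : Submodule ℂ E) (hd : Disjoint W W')
    (h : ∀ i : Fin 6, (i : ℕ) < 4 → a i ∈ W) (h' : a 4 ∈ W' ∧ a 5 ∈ W') (x : E) (hx : x ∈ W) :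
    a.repr x 4 = 0 ∧ a.repr x 5 = 0 := by
  have hs := a.sum_repr x
  rw [Fin.sum_univ_six] at hs
  obtain ⟨y, hy⟩ : ∃ y, y = a.repr x 4 • a 4 + a.repr x 5 • a 5 := ⟨_, rfl⟩
  have hy1 : y ∈ W' := by
    rw [hy]; exact W'.add_mem (W'.smul_mem _ h'.1) (W'.smul_mem _ h'.2)
  have hy2 : y = x - (a.repr x 0 • a 0 + a.repr x 1 • a 1 + a.repr x 2 • a 2
      + a.repr x 3 • a 3) := by
    rw [hy]
    conv_rhs => rw [← hs]
    simp only [map_add, map_smul, Basis.repr_self]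
    simp
    abel
  have hy3 : y ∈ W := by
    rw [hy2]
    exact W.sub_mem hx (W.add_mem (W.add_mem (W.add_mem (W.smul_mem _ (h 0 (by simp)))
      (W.smul_mem _ (h 1 (by simp)))) (W.smul_mem _ (h 2 (by simp)))) (W.smul_mem _ (h 3 (by simp))))
  have hy0 : y = 0 := Submodule.disjoint_def.1 hd y hy3 hy1
  rw [hy0] at hy
  have r4 := congrArg (fun z => a.repr z 4) hy
  have r5 := congrArg (fun z => a.repr z 5) hy
  simp only [map_add, map_smul, Basis.repr_self, map_zero] at r4 r5
  simp at r4 r5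
  exact ⟨r4.symm, r5.symm⟩

theorem sum_cols (A : E →ₗ[ℂ] E) (a : Basis (Fin 6) ℂ E) (j : Fin 6) :
    A (a j) = ∑ i, LinearMap.toMatrix a a A i j • a i := by
  conv_lhs => rw [← a.sum_repr (A (a j))]
  simp [LinearMap.toMatrix_apply]

theorem sp_eqs (ω : E →ₗ[ℂ] E →ₗ[ℂ] ℂ) (v : Fin 4 → E) (hJ : ∀ i j, ω (v i) (v j) = JM i j)
    (F : E → E) (N : Fin 4 → Fin 4 → ℂ) (s : ℂ) (hF : ∀ j, F (v j) = ∑ k, N k j • v k)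
    (h : ∀ i j, ω (F (v i)) (v j) + ω (v i) (F (v j)) = s * ω (v i) (v j)) :
    N 0 0 + N 1 1 = s ∧ N 2 2 + N 3 3 = s ∧ N 1 2 = N 3 0 ∧ N 2 0 + N 1 3 = 0 ∧
      N 3 1 + N 0 2 = 0 ∧ N 2 1 = N 0 3 := by
  simp only [hF, map_add, LinearMap.add_apply, map_smul, LinearMap.smul_apply, hJ,
    Fin.sum_univ_four, smul_eq_mul] at h
  have h01 := h 0 1
  have h23 := h 2 3
  have h02 := h 0 2
  have h03 := h 0 3
  have h12 := h 1 2
  have h13 := h 1 3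
  simp [JM] at h01 h23 h02 h03 h12 h13
  refine ⟨?_, ?_, ?_, ?_, ?_, ?_⟩
  · linear_combination h01
  · linear_combination h23
  · linear_combination h02
  · linear_combination h03
  · linear_combination - h12
  · linear_combination h13

theorem qform_of_sympOn (hE : finrank ℂ E = 6) (A : E →ₗ[ℂ] E) (W : Submodule ℂ E)
    (hW : finrank ℂ W = 4) (h : SympOn A (LinearMap.trace ℂ E A) W) : QForm A := by
  obtain ⟨hA, ω, halt, hnd, hrel⟩ := h
  obtain ⟨v, hv, hvi, hvJ⟩ := symp_basis halt hnd hW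
  have hJ := JM_of halt v hv hvJ
  obtain ⟨W', hc⟩ := Submodule.exists_isCompl W
  have hW' : finrank ℂ W' = 2 := by
    have := Submodule.finrank_add_eq_of_isCompl hc
    omega
  let w := Module.finBasisOfFinrankEq ℂ W' hW'
  have hwi : LinearIndependent ℂ (fun i => (w i : E)) :=
    w.linearIndependent.map' W'.subtype (Submodule.ker_subtype W')
  obtain ⟨a, a0, a1, a2, a3, a4, a5⟩ := concat_basis hE W W' hc.disjoint v (fun i => (w i : E)) hv
    (fun i => (w i).2) hvi hwi
  have ha : ∀ i : Fin 6, (i : ℕ) < 4 → a i ∈ W := by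
    intro i hi
    fin_cases i
    · exact a0.symm ▸ hv 0
    · exact a1.symm ▸ hv 1
    · exact a2.symm ▸ hv 2
    · exact a3.symm ▸ hv 3
    · simp at hi
    · simp at hi
  have hz : ∀ j : Fin 6, (j : ℕ) < 4 →
      LinearMap.toMatrix a a A 4 j = 0 ∧ LinearMap.toMatrix a a A 5 j = 0 := by
    intro j hj
    rw [LinearMap.toMatrix_apply, LinearMap.toMatrix_apply]
    exact coord_zero a W W' hc.disjoint ha ⟨by rw [a4]; exact (w 0).2, by rw [a5]; exact (w 1).2⟩ _
      (hA _ (ha j hj))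
  have hcol := sum_cols A a
  have htr := LinearMap.trace_eq_matrix_trace ℂ a A
  obtain ⟨M, hM⟩ : ∃ M, M = LinearMap.toMatrix a a A := ⟨_, rfl⟩
  rw [← hM] at hz hcol htr
  obtain ⟨t, ht⟩ : ∃ t, t = LinearMap.trace ℂ E A := ⟨_, rfl⟩
  rw [← ht] at hrel htr
  let σ : Fin 4 → Fin 6 := ![0, 1, 2, 3]
  have hσ : ∀ j, a (σ j) = v j ∧ ((σ j : Fin 6) : ℕ) < 4 := by
    intro j
    fin_cases j
    · exact ⟨a0, by simp [σ]⟩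
    · exact ⟨a1, by simp [σ]⟩
    · exact ⟨a2, by simp [σ]⟩
    · exact ⟨a3, by simp [σ]⟩
  have hF : ∀ j, A (v j) = ∑ k, M (σ k) (σ j) • v k := by
    intro j
    rw [← (hσ j).1, hcol, Fin.sum_univ_six, Fin.sum_univ_four, (hz _ (hσ j).2).1,
      (hz _ (hσ j).2).2, a0, a1, a2, a3]
    simp [σ]
  obtain ⟨q1, q2, q3, q4, q5, q6⟩ := sp_eqs ω v hJ A (fun k j => M (σ k) (σ j)) t hF
    (fun i j => hrel _ (hv i) _ (hv j))
  simp [σ] at q1 q2 q3 q4 q5 q6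
  rw [Matrix.trace, Fin.sum_univ_six] at htr
  simp only [Matrix.diag_apply] at htr
  have htt : t = - (M 4 4 + M 5 5) := by linear_combination - htr - q1 - q2
  refine ⟨a, M, hcol, hz, ?_, ?_, q3, q4, q5, q6⟩
  · rw [q1, htt]
  · rw [q2, htt]

end PartFive


section PartSix

variable {E : Type*} [AddCommGroup E] [Module ℂ E] [FiniteDimensional ℂ E]

theorem pr_setup (V₂ V₄ : Submodule ℂ E) (hc : IsCompl V₂ V₄)
    (v : Fin 4 → V₄) (w : Basis (Fin 2) ℂ V₂) (c : Basis (Fin 6) ℂ E)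
    (c0 : c 0 = v 0) (c1 : c 1 = v 1) (c2 : c 2 = v 2) (c3 : c 3 = v 3)
    (c4 : c 4 = w 0) (c5 : c 5 = w 1) (f : E →ₗ[ℂ] E) (M : Fin 6 → Fin 6 → ℂ)
    (hf : ∀ j, f (c j) = ∑ i, M i j • c i) :
    (∀ j, V₄.linearProjOfIsCompl V₂ hc.symm (f (c j)) =
      M 0 j • v 0 + M 1 j • v 1 + M 2 j • v 2 + M 3 j • v 3) ∧
    (LinearMap.trace ℂ ↥V₂) ((V₂.linearProjOfIsCompl V₄ hc) ∘ₗ f ∘ₗ V₂.subtype) =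
      M 4 4 + M 5 5 := by
  have e4 : ∀ x : V₄, V₄.linearProjOfIsCompl V₂ hc.symm (x : E) = x :=
    Submodule.linearProjOfIsCompl_apply_left hc.symm
  have z4 : ∀ x : V₂, V₄.linearProjOfIsCompl V₂ hc.symm (x : E) = 0 := fun x =>
    Submodule.linearProjOfIsCompl_apply_right hc.symm x
  have e2 : ∀ x : V₂, V₂.linearProjOfIsCompl V₄ hc (x : E) = x :=
    Submodule.linearProjOfIsCompl_apply_left hc
  have z2 : ∀ x : V₄, V₂.linearProjOfIsCompl V₄ hc (x : E) = 0 := fun x =>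
    Submodule.linearProjOfIsCompl_apply_right hc x
  constructor
  · intro j
    rw [hf, Fin.sum_univ_six]
    simp only [map_add, map_smul, c0, c1, c2, c3, c4, c5, e4, z4, smul_zero, add_zero]
  · rw [LinearMap.trace_eq_matrix_trace ℂ w, Matrix.trace_fin_two, LinearMap.toMatrix_apply,
      LinearMap.toMatrix_apply]
    have p0 : ((V₂.linearProjOfIsCompl V₄ hc) ∘ₗ f ∘ₗ V₂.subtype) (w 0) =
        M 4 4 • w 0 + M 5 4 • w 1 := by
      simp only [LinearMap.comp_apply, Submodule.subtype_apply]
      rw [← c4, hf, Fin.sum_univ_six]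
      simp only [map_add, map_smul, c0, c1, c2, c3, c4, c5, e2, z2, smul_zero, add_zero, zero_add]
    have p1 : ((V₂.linearProjOfIsCompl V₄ hc) ∘ₗ f ∘ₗ V₂.subtype) (w 1) =
        M 4 5 • w 0 + M 5 5 • w 1 := by
      simp only [LinearMap.comp_apply, Submodule.subtype_apply]
      rw [← c5, hf, Fin.sum_univ_six]
      simp only [map_add, map_smul, c0, c1, c2, c3, c4, c5, e2, z2, smul_zero, add_zero, zero_add]
    rw [p0, p1]
    simp

theorem sp_of_eqs (ω : E →ₗ[ℂ] E →ₗ[ℂ] ℂ) (v : Basis (Fin 4) ℂ E)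
    (hJ : ∀ i j, ω (v i) (v j) = JM i j)
    (F : E →ₗ[ℂ] E) (N : Fin 4 → Fin 4 → ℂ) (hF : ∀ j, F (v j) = ∑ k, N k j • v k)
    (h : N 0 0 + N 1 1 = 0 ∧ N 2 2 + N 3 3 = 0 ∧ N 1 2 = N 3 0 ∧ N 2 0 + N 1 3 = 0 ∧
      N 3 1 + N 0 2 = 0 ∧ N 2 1 = N 0 3) (x y : E) : ω (F x) y + ω x (F y) = 0 := by
  have key : ω ∘ₗ F + ω.compl₂ F = 0 := by
    apply v.ext
    intro i
    apply v.ext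
    intro j
    simp only [LinearMap.add_apply, LinearMap.comp_apply, LinearMap.compl₂_apply, hF,
      Fin.sum_univ_four, map_add, map_smul, LinearMap.smul_apply, hJ, smul_eq_mul,
      LinearMap.zero_apply]
    obtain ⟨h1, h2, h3, h4, h5, h6⟩ := h
    fin_cases i <;> fin_cases j <;> simp [JM]
    · linear_combination h1
    · linear_combination h3
    · linear_combination h4
    · linear_combination - h1
    · linear_combination - h5
    · linear_combination h6
    · linear_combination - h3
    · linear_combination h5
    · linear_combination h2
    · linear_combination - h4
    · linear_combination - h6
    · linear_combination - h2
  exact LinearMap.congr_fun (LinearMap.congr_fun key x) y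

theorem rhs_iff (hE : finrank ℂ E = 6) (V₂ V₄ : Submodule ℂ E) (hc : IsCompl V₂ V₄)
    (h2 : finrank ℂ ↥V₂ = 2) (h4 : finrank ℂ ↥V₄ = 4)
    (ω : ↥V₄ →ₗ[ℂ] ↥V₄ →ₗ[ℂ] ℂ) (halt : ∀ v : ↥V₄, ω v v = 0)
    (hnd : ∀ v : ↥V₄, (∀ w : ↥V₄, ω v w = 0) → v = 0) (A : E →ₗ[ℂ] E) :
    (∃ T : E ≃ₗ[ℂ] E, ∃ f : E →ₗ[ℂ] E,
        f = T.toLinearMap ∘ₗ A ∘ₗ T.symm.toLinearMap ∧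
        (∀ x : E, x ∈ V₄ → f x ∈ V₄) ∧
        ∃ f₄ : ↥V₄ →ₗ[ℂ] ↥V₄,
          (∀ x y : ↥V₄, ω (f₄ x) y + ω x (f₄ y) = 0) ∧
          ∀ x : ↥V₄,
            (V₄.linearProjOfIsCompl V₂ hc.symm) (f ↑x) =
              -((LinearMap.trace ℂ ↥V₂)
                  ((V₂.linearProjOfIsCompl V₄ hc) ∘ₗ f ∘ₗ V₂.subtype) / 2) • x +
                f₄ x) ↔ QForm A := by
  obtain ⟨v, -, hvi, hvJ⟩ := symp_basis (E := ↥V₄) (W := ⊤) (ω := ω) (fun x _ => halt x)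
    (fun x _ h => hnd x fun y => h y trivial) (by rw [finrank_top, h4])
  have hJ := JM_of (E := ↥V₄) (W := ⊤) (ω := ω) (fun x _ => halt x) v (fun _ => trivial) hvJ
  let w := Module.finBasisOfFinrankEq ℂ V₂ h2
  have hwi : LinearIndependent ℂ (fun i => (w i : E)) :=
    w.linearIndependent.map' V₂.subtype (Submodule.ker_subtype V₂)
  have hvi' : LinearIndependent ℂ (fun i => (v i : E)) :=
    hvi.map' V₄.subtype (Submodule.ker_subtype V₄)
  obtain ⟨c, c0, c1, c2, c3, c4, c5⟩ := concat_basis hE V₄ V₂ hc.disjoint.symm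
    (fun i => (v i : E)) (fun i => (w i : E)) (fun i => (v i).2) (fun i => (w i).2) hvi' hwi
  have hcV : ∀ i : Fin 6, (i : ℕ) < 4 → c i ∈ V₄ := by
    intro i hi
    fin_cases i
    · exact c0.symm ▸ (v 0).2
    · exact c1.symm ▸ (v 1).2
    · exact c2.symm ▸ (v 2).2
    · exact c3.symm ▸ (v 3).2
    · simp at hi
    · simp at hi
  let σ : Fin 4 → Fin 6 := ![0, 1, 2, 3]
  have hσ : ∀ j, c (σ j) = v j ∧ ((σ j : Fin 6) : ℕ) < 4 := by
    intro j
    fin_cases j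
    · exact ⟨c0, by simp [σ]⟩
    · exact ⟨c1, by simp [σ]⟩
    · exact ⟨c2, by simp [σ]⟩
    · exact ⟨c3, by simp [σ]⟩
  constructor
  · rintro ⟨T, f, hfT, hfV, f₄, hf₄, hpr⟩
    have hcol := sum_cols f c
    have hz : ∀ j : Fin 6, (j : ℕ) < 4 →
        LinearMap.toMatrix c c f 4 j = 0 ∧ LinearMap.toMatrix c c f 5 j = 0 := by
      intro j hj
      rw [LinearMap.toMatrix_apply, LinearMap.toMatrix_apply]
      exact coord_zero c V₄ V₂ hc.disjoint.symm hcV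
        ⟨by rw [c4]; exact (w 0).2, by rw [c5]; exact (w 1).2⟩ _ (hfV _ (hcV j hj))
    obtain ⟨M, hM⟩ : ∃ M, M = LinearMap.toMatrix c c f := ⟨_, rfl⟩
    rw [← hM] at hz hcol
    obtain ⟨p4, ptr⟩ := pr_setup V₂ V₄ hc v w c c0 c1 c2 c3 c4 c5 f M hcol
    rw [ptr] at hpr
    let N : Fin 4 → Fin 4 → ℂ := fun k j =>
      M (σ k) (σ j) + if k = j then (M 4 4 + M 5 5) / 2 else 0
    have hF : ∀ j, f₄ (v j) = ∑ k, N k j • v k := by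
      intro j
      have h1 := hpr (v j)
      rw [← (hσ j).1, p4] at h1
      have h2 : f₄ (v j) = M 0 (σ j) • v 0 + M 1 (σ j) • v 1 + M 2 (σ j) • v 2 + M 3 (σ j) • v 3
          + ((M 4 4 + M 5 5) / 2) • v j := by
        rw [h1]; module
      rw [h2]
      simp only [N, add_smul, Finset.sum_add_distrib, ite_smul, zero_smul, Finset.sum_ite_eq',
        Finset.mem_univ, if_true, Fin.sum_univ_four]
      simp [σ]
    obtain ⟨q1, q2, q3, q4, q5, q6⟩ := sp_eqs ω v hJ f₄ N 0 hF
      (fun i j => by rw [hf₄, zero_mul])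
    simp [σ, N] at q1 q2 q3 q4 q5 q6
    refine ⟨c.map T.symm, M, ?_, hz, ?_, ?_, q3, q4, q5, q6⟩
    · intro j
      have h1 := hcol j
      rw [hfT] at h1
      have h2 := congrArg T.symm h1
      simpa using h2
    · linear_combination q1
    · linear_combination q2
  · rintro ⟨a, M, hcol, hz, q1, q2, q3, q4, q5, q6⟩
    let T := a.equiv c (Equiv.refl _)
    have hT : ∀ i, T (a i) = c i := fun i => by simp [T]
    have hT' : ∀ i, T.symm (c i) = a i := fun i => by rw [← hT, T.symm_apply_apply]
    obtain ⟨f, hf⟩ : ∃ f, f = T.toLinearMap ∘ₗ A ∘ₗ T.symm.toLinearMap := ⟨_, rfl⟩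
    have hfc : ∀ j, f (c j) = ∑ i, M i j • c i := by
      intro j
      rw [hf]
      simp only [LinearMap.comp_apply, LinearEquiv.coe_coe, hT', hcol, map_sum, map_smul, hT]
    obtain ⟨p4, ptr⟩ := pr_setup V₂ V₄ hc v w c c0 c1 c2 c3 c4 c5 f M hfc
    let vB : Basis (Fin 4) ℂ V₄ := basisOfLinearIndependentOfCardEqFinrank hvi (by simp [h4])
    have hvB : ∀ i, vB i = v i := fun i => by simp [vB]
    let f₄ : ↥V₄ →ₗ[ℂ] ↥V₄ := (V₄.linearProjOfIsCompl V₂ hc.symm) ∘ₗ f ∘ₗ V₄.subtype +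
      ((M 4 4 + M 5 5) / 2) • LinearMap.id
    have hf₄ : ∀ x : V₄, f₄ x = (V₄.linearProjOfIsCompl V₂ hc.symm) (f x) +
      ((M 4 4 + M 5 5) / 2) • x := fun x => rfl
    let N : Fin 4 → Fin 4 → ℂ := fun k j =>
      M (σ k) (σ j) + if k = j then (M 4 4 + M 5 5) / 2 else 0
    refine ⟨T, f, hf, ?_, f₄, ?_, ?_⟩
    · intro x hx
      have h1 := vB.sum_repr ⟨x, hx⟩
      have h2 := congrArg (fun z : V₄ => f (z : E)) h1
      simp only [Fin.sum_univ_four, Submodule.coe_add, Submodule.coe_smul, map_add, map_smul,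
        hvB] at h2
      rw [← h2]
      have h3 : ∀ j, f (v j : E) ∈ V₄ := by
        intro j
        rw [← (hσ j).1, hfc, Fin.sum_univ_six, (hz _ (hσ j).2).1, (hz _ (hσ j).2).2, zero_smul,
          zero_smul, add_zero, add_zero]
        exact V₄.add_mem (V₄.add_mem (V₄.add_mem (V₄.smul_mem _ (hcV 0 (by simp)))
          (V₄.smul_mem _ (hcV 1 (by simp)))) (V₄.smul_mem _ (hcV 2 (by simp))))
          (V₄.smul_mem _ (hcV 3 (by simp)))
      exact V₄.add_mem (V₄.add_mem (V₄.add_mem (V₄.smul_mem _ (h3 0))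
          (V₄.smul_mem _ (h3 1))) (V₄.smul_mem _ (h3 2))) (V₄.smul_mem _ (h3 3))
    · refine sp_of_eqs ω vB (fun i j => by rw [hvB, hvB, hJ]) f₄ N ?_ ?_
      · intro j
        rw [hf₄]
        simp only [hvB]
        rw [← (hσ j).1, p4]
        simp only [N, add_smul, Finset.sum_add_distrib, ite_smul, zero_smul, Finset.sum_ite_eq',
          Finset.mem_univ, if_true, Fin.sum_univ_four]
        simp [σ]
      · simp [N, σ]
        exact ⟨by linear_combination q1, by linear_combination q2, q3, q4, q5, q6⟩
    · intro x
      rw [hf₄, ptr]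
      module

end PartSix


section PartSeven

variable {g : Type*} [LieRing g] [LieAlgebra ℂ g]

theorem std_expand (b : Basis (Fin 7) ℂ (Module.Dual ℂ g)) (c : Fin 7 → Module.Dual ℂ g)
    (h0 : b 0 = c 4 + Complex.I • c 0) (h1 : b 1 = c 5 - Complex.I • c 1)
    (h2 : b 2 = c 0) (h3 : b 3 = c 1) (h4 : b 4 = c 2) (h5 : b 5 = c 3)
    (h6 : b 6 = Complex.I • c 3 - Complex.I • c 6) (x y z w : g) :
    stdG2 b ![x, y, z, w] =
      (wedgeCov 4 ![c 4, c 5, c 0, c 1] + wedgeCov 4 ![c 4, c 5, c 2, c 3]) ![x, y, z, w]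
      + Complex.I * (- wedgeCov 4 ![c 6, b 1, b 3, b 5] ![x, y, z, w]
        + wedgeCov 4 ![c 6, b 1, b 2, b 4] ![x, y, z, w]
        + wedgeCov 4 ![c 6, b 0, b 3, b 4] ![x, y, z, w]
        + wedgeCov 4 ![c 6, b 0, b 2, b 5] ![x, y, z, w]) := by
  have hI : (Complex.I ^ 2 + 1) * wedgeCov 4 ![c 0, c 1, c 2, c 3] ![x, y, z, w] = 0 := by
    rw [Complex.I_sq]; ring
  unfold stdG2 bw
  simp only [AlternatingMap.add_apply, AlternatingMap.sub_apply, wedge4_apply, h0, h1, h2, h3, h4,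
    h5, h6, LinearMap.add_apply, LinearMap.sub_apply, LinearMap.smul_apply, smul_eq_mul] at hI ⊢
  generalize Complex.I = I at *
  linear_combination hI

theorem theta_closed (D : g →ₗ[ℂ] g) (c : Fin 7 → Module.Dual ℂ g) (M : Fin 6 → Fin 6 → ℂ)
    (hq : QEq M)
    (h0 : ∀ x, c 0 (D x) = M 0 0 * c 0 x + M 0 1 * c 1 x + M 0 2 * c 2 x + M 0 3 * c 3 x
      + M 0 4 * c 4 x + M 0 5 * c 5 x)
    (h1 : ∀ x, c 1 (D x) = M 1 0 * c 0 x + M 1 1 * c 1 x + M 1 2 * c 2 x + M 1 3 * c 3 x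
      + M 1 4 * c 4 x + M 1 5 * c 5 x)
    (h2 : ∀ x, c 2 (D x) = M 2 0 * c 0 x + M 2 1 * c 1 x + M 2 2 * c 2 x + M 2 3 * c 3 x
      + M 2 4 * c 4 x + M 2 5 * c 5 x)
    (h3 : ∀ x, c 3 (D x) = M 3 0 * c 0 x + M 3 1 * c 1 x + M 3 2 * c 2 x + M 3 3 * c 3 x
      + M 3 4 * c 4 x + M 3 5 * c 5 x)
    (h4 : ∀ x, c 4 (D x) = M 4 0 * c 0 x + M 4 1 * c 1 x + M 4 2 * c 2 x + M 4 3 * c 3 x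
      + M 4 4 * c 4 x + M 4 5 * c 5 x)
    (h5 : ∀ x, c 5 (D x) = M 5 0 * c 0 x + M 5 1 * c 1 x + M 5 2 * c 2 x + M 5 3 * c 3 x
      + M 5 4 * c 4 x + M 5 5 * c 5 x)
    (Θ : g [⋀^Fin 4]→ₗ[ℂ] ℂ)
    (hΘ : Θ = wedgeCov 4 ![c 4, c 5, c 0, c 1] + wedgeCov 4 ![c 4, c 5, c 2, c 3])
    (x y z w : g) : Θ ![D x, y, z, w] - Θ ![D y, x, z, w] + Θ ![D z, x, y, w]
      - Θ ![D w, x, y, z] = 0 := by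
  obtain ⟨hz, q1, q2, q3, q4, q5, q6⟩ := hq
  have hz0 := hz 0 (by simp)
  have hz1 := hz 1 (by simp)
  have hz2 := hz 2 (by simp)
  have hz3 := hz 3 (by simp)
  have q1' : M 0 0 = -(M 4 4 + M 5 5) - M 1 1 := by linear_combination q1
  have q2' : M 2 2 = -(M 4 4 + M 5 5) - M 3 3 := by linear_combination q2
  have q4' : M 2 0 = - M 1 3 := by linear_combination q4
  have q5' : M 3 1 = - M 0 2 := by linear_combination q5
  simp only [hΘ, AlternatingMap.add_apply, wedge4_apply, h0, h1, h2, h3, h4, h5, hz0, hz1, hz2, hz3,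
    q1', q2', q3, q4', q5', q6, zero_mul, zero_add]
  ring

theorem lhs_of_q [FiniteDimensional ℂ g] (hg : finrank ℂ g = 7) (ν : Module.Dual ℂ g)
    (D : g →ₗ[ℂ] g) (hbr : ∀ x y : g, ⁅x, y⁆ = ν x • D y - ν y • D x) (hνD : ∀ x, ν (D x) = 0)
    (e₇ : g) (hνe : ν e₇ = 1) (hDe : D e₇ = 0) {E : Type*} [AddCommGroup E] [Module ℂ E]
    (ι : E →ₗ[ℂ] g) (hι : Function.Injective ι) (hνι : ∀ x, ν (ι x) = 0) (A : E →ₗ[ℂ] E)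
    (hA : ∀ x, D (ι x) = ι (A x)) (h : QForm A) :
    ∃ Ψ : g [⋀^Fin 4]→ₗ[ℂ] ℂ, ceDiff 3 ⇑Ψ = 0 ∧
        ∃ b : Basis (Fin 7) ℂ (Module.Dual ℂ g), Ψ = stdG2 b := by
  obtain ⟨a, M, hcol, hq⟩ := h
  have hli : LinearIndependent ℂ
      ![ι (a 0), ι (a 1), ι (a 2), ι (a 3), ι (a 4), ι (a 5), e₇] := by
    rw [Fintype.linearIndependent_iff]
    intro k hk
    rw [Fin.sum_univ_seven] at hk
    simp at hk
    have k6 := congrArg ν hk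
    simp [hνι, hνe] at k6
    rw [k6, zero_smul, add_zero] at hk
    simp only [← map_smul, ← map_add] at hk
    rw [← map_zero ι] at hk
    have hk' := hι hk
    have r := Fintype.linearIndependent_iff.1 a.linearIndependent
      ![k 0, k 1, k 2, k 3, k 4, k 5] (by rw [Fin.sum_univ_six]; exact hk')
    intro i
    fin_cases i
    exacts [r 0, r 1, r 2, r 3, r 4, r 5, k6]
  let gB : Basis (Fin 7) ℂ g := basisOfLinearIndependentOfCardEqFinrank hli (by simp [hg])
  have g0 : gB 0 = ι (a 0) := by simp [gB]
  have g1 : gB 1 = ι (a 1) := by simp [gB]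
  have g2 : gB 2 = ι (a 2) := by simp [gB]
  have g3 : gB 3 = ι (a 3) := by simp [gB]
  have g4 : gB 4 = ι (a 4) := by simp [gB]
  have g5 : gB 5 = ι (a 5) := by simp [gB]
  have g6 : gB 6 = e₇ := by simp [gB]
  obtain ⟨c, hc⟩ : ∃ c : Fin 7 → Module.Dual ℂ g, ∀ i, c i = gB.coord i := ⟨_, fun _ => rfl⟩
  have hcg : ∀ i j, c i (gB j) = if j = i then 1 else 0 := by
    intro i j
    rw [hc, Basis.coord_apply, Basis.repr_self, Finsupp.single_apply]
  have hc6 : c 6 = ν := by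
    apply gB.ext
    intro j
    rw [hcg]
    fin_cases j
    · simp [g0, hνι]
    · simp [g1, hνι]
    · simp [g2, hνι]
    · simp [g3, hνι]
    · simp [g4, hνι]
    · simp [g5, hνι]
    · simp [g6, hνe]
  have hDg : ∀ j : Fin 6, D (gB j.castSucc) = ∑ i : Fin 6, M i j • gB i.castSucc := by
    have hga : ∀ j : Fin 6, gB j.castSucc = ι (a j) := by
      intro j
      fin_cases j
      exacts [g0, g1, g2, g3, g4, g5]
    intro j
    rw [hga, hA, hcol, map_sum]
    simp only [map_smul, hga]
  have hcD : ∀ (k : Fin 6) x, c k.castSucc (D x) = ∑ m : Fin 6, M k m * c m.castSucc x := by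
    intro k
    have : c k.castSucc ∘ₗ D = ∑ m : Fin 6, M k m • c m.castSucc := by
      apply gB.ext
      intro j
      induction j using Fin.lastCases with
      | last =>
        have : gB (Fin.last 6) = e₇ := g6
        rw [LinearMap.comp_apply, this, hDe, map_zero, ← this]
        simp only [LinearMap.sum_apply, LinearMap.smul_apply, hcg]
        symm
        apply Finset.sum_eq_zero
        intro m _
        rw [if_neg (Fin.castSucc_lt_last m).ne', smul_zero]
      | cast j =>
        rw [LinearMap.comp_apply, hDg]
        simp only [map_sum, map_smul, LinearMap.sum_apply, LinearMap.smul_apply, hcg]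
        simp
    intro x
    have h1 := LinearMap.congr_fun this x
    simpa using h1
  simp only [Fin.sum_univ_six] at hcD
  have hbli : LinearIndependent ℂ
      ![c 4 + Complex.I • c 0, c 5 - Complex.I • c 1, c 0, c 1, c 2, c 3,
        Complex.I • c 3 - Complex.I • c 6] := by
    rw [Fintype.linearIndependent_iff]
    intro k hk
    rw [Fin.sum_univ_seven] at hk
    have ev : ∀ j, _ := fun j => LinearMap.congr_fun hk (gB j)
    have e0 := ev 0
    have e1 := ev 1
    have e2 := ev 2
    have e3 := ev 3
    have e4 := ev 4
    have e5 := ev 5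
    have e6 := ev 6
    simp [hcg] at e0 e1 e2 e3 e4 e5 e6
    simp [e4, e5, e6] at e0 e1 e3
    intro i
    fin_cases i
    exacts [e4, e5, e0, e1, e2, e3, e6]
  let b : Basis (Fin 7) ℂ (Module.Dual ℂ g) := basisOfLinearIndependentOfCardEqFinrank hbli
    (by rw [Subspace.dual_finrank_eq, hg]; simp)
  have hexp := std_expand b c (by simp [b]) (by simp [b]) (by simp [b]) (by simp [b]) (by simp [b])
    (by simp [b]) (by simp [b])
  refine ⟨stdG2 b, ?_, b, rfl⟩
  obtain ⟨Θ, hΘ⟩ : ∃ Θ, Θ = wedgeCov 4 ![c 4, c 5, c 0, c 1] + wedgeCov 4 ![c 4, c 5, c 2, c 3] :=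
    ⟨_, rfl⟩
  have hcl := theta_closed D c M hq (hcD 0) (hcD 1) (hcD 2) (hcD 3) (hcD 4) (hcD 5) Θ hΘ
  funext x
  have t0 := ce_wedge ν D hbr Θ hcl x
  have t1 := ce_wedge_nu ν D hbr hνD (b 1) (b 3) (b 5) x
  have t2 := ce_wedge_nu ν D hbr hνD (b 1) (b 2) (b 4) x
  have t3 := ce_wedge_nu ν D hbr hνD (b 0) (b 3) (b 4) x
  have t4 := ce_wedge_nu ν D hbr hνD (b 0) (b 2) (b 5) x
  rw [ceDiff3_apply] at t0 t1 t2 t3 t4 ⊢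
  simp only [hexp]
  rw [← hΘ, hc6]
  rw [Pi.zero_apply]
  linear_combination t0 + Complex.I * (- t1 + t2 + t3 + t4)

end PartSeven


section PartEight

variable {g : Type*} [LieRing g] [LieAlgebra ℂ g]

theorem symp_of_lhs [FiniteDimensional ℂ g] (ν : Module.Dual ℂ g)
    (D : g →ₗ[ℂ] g) (hbr : ∀ x y : g, ⁅x, y⁆ = ν x • D y - ν y • D x) (hνD : ∀ x, ν (D x) = 0)
    (hν : ν ≠ 0) {E : Type*} [AddCommGroup E] [Module ℂ E] [FiniteDimensional ℂ E]
    (ι : E →ₗ[ℂ] g) (hι : Function.Injective ι) (hνι : ∀ x, ν x = 0 → ∃ y, ι y = x)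
    (A : E →ₗ[ℂ] E)
    (hA : ∀ x, D (ι x) = ι (A x)) (b : Basis (Fin 7) ℂ (Module.Dual ℂ g))
    (h : ceDiff 3 ⇑(stdG2 b) = 0) :
    ∃ W : Submodule ℂ E, 4 ≤ finrank ℂ W ∧ SympOn A (LinearMap.trace ℂ E A) W := by
  -- trace
  have htr : LinearMap.trace ℂ g D = LinearMap.trace ℂ E A := by
    let eq := LinearEquiv.ofInjective ι hι
    let D₁ : g →ₗ[ℂ] E := eq.symm.toLinearMap ∘ₗ
      D.codRestrict (LinearMap.range ι) (fun x => hνι _ (hνD x))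
    have hD₁ : ∀ x, ι (D₁ x) = D x := by
      intro x
      have : eq (D₁ x) = D.codRestrict (LinearMap.range ι) (fun x => hνι _ (hνD x)) x := by
        simp [D₁]
      exact congrArg Subtype.val this
    have e1 : D = ι ∘ₗ D₁ := by ext x; exact (hD₁ x).symm
    have e2 : A = D₁ ∘ₗ ι := by
      ext x
      apply hι
      rw [← hA, LinearMap.comp_apply, hD₁]
    rw [e2]
    conv_lhs => rw [e1]
    exact LinearMap.trace_comp_comm' _ _
  let eB : Basis (Fin 7) ℂ g := b.dualBasis.map (Module.evalEquiv ℂ g).symm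
  have he : ∀ i j, b i (eB j) = if i = j then 1 else 0 := by
    intro i j
    simp only [eB, Basis.map_apply, Module.apply_evalEquiv_symm_apply]
    rw [Basis.dualBasis_apply_self]
  have hb : ∀ i x, eB.repr x i = b i x := by
    intro i x
    have : eB.coord i = b i := by
      apply eB.ext
      intro j
      rw [he, Basis.coord_apply, Basis.repr_self, Finsupp.single_apply]
      simp [eq_comm]
    rw [← this, Basis.coord_apply]
  let d : Matrix (Fin 7) (Fin 7) ℂ := LinearMap.toMatrix eB eB D
  have hd : ∀ i j, b i (D (eB j)) = d i j := by
    intro i j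
    rw [← hb]
    simp [d, LinearMap.toMatrix_apply]
  let n : Fin 7 → ℂ := fun i => ν (eB i)
  have hDe : ∀ j, D (eB j) = ∑ i, d i j • eB i := by
    intro j
    conv_lhs => rw [← eB.sum_repr (D (eB j))]
    simp only [hb, hd]
  have hn0 : n ≠ 0 := by
    intro h0
    apply hν
    apply eB.ext
    intro i
    exact congrFun h0 i
  have hrel := closed_imp ν D hbr b eB he h n d (fun _ => rfl) hd (by
    intro j
    have h1 := hνD (eB j)
    rw [hDe] at h1
    simp only [map_sum, map_smul, smul_eq_mul] at h1
    rw [← h1]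
    exact Finset.sum_congr rfl fun k _ => mul_comm _ _)
  have hdt : d.trace = LinearMap.trace ℂ g D := (LinearMap.trace_eq_matrix_trace ℂ eB D).symm
  obtain ⟨t, ht⟩ : ∃ t, t = d.trace := ⟨_, rfl⟩
  rw [← ht] at hrel hdt
  let L : (Fin 7 → ℂ) ≃ₗ[ℂ] g := eB.equivFun.symm
  have hL : ∀ x, L x = ∑ i, x i • eB i := fun x => eB.equivFun_symm_apply x
  let p : (Fin 7 → ℂ) →ₗ[ℂ] g →ₗ[ℂ] ℂ := Fintype.linearCombination ℂ b
  have hp : ∀ x w, p x w = ∑ i, x i * b i w := by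
    intro x w
    simp [p, Fintype.linearCombination_apply]
  have hpL : ∀ x y, p x (L y) = x ⬝ᵥ y := by
    intro x y
    rw [hp]
    simp only [dotProduct]
    apply Finset.sum_congr rfl
    intro i _
    rw [hL]
    simp [he]
  have hDL : ∀ y, D (L y) = L (d.mulVec y) := by
    intro y
    rw [hL, hL]
    simp only [map_sum, map_smul, hDe, Matrix.mulVec, dotProduct, Finset.smul_sum, Finset.sum_smul]
    rw [Finset.sum_comm]
    refine Finset.sum_congr rfl fun i _ => Finset.sum_congr rfl fun j _ => ?_
    rw [smul_smul, mul_comm]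
  let B : (Fin 7 → ℂ) →ₗ[ℂ] g := L.toLinearMap ∘ₗ (PhiM n).mulVecLin
  have hB : ∀ x, B x = L ((PhiM n).mulVec x) := fun x => rfl
  have hS : SympOn D t (LinearMap.range B) := by
    apply sympOn_of_skew p B D d.transpose.mulVecLin t
    · intro x y
      rw [hB, hB, hpL, hpL, Matrix.dotProduct_mulVec, ← Matrix.mulVec_transpose, PhiM_transpose,
        Matrix.neg_mulVec, neg_dotProduct, dotProduct_comm]
    · intro w hw
      apply eB.ext_elem
      intro i
      rw [hb]
      have := hw (Pi.single i 1)
      rw [hp] at this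
      simpa [Pi.single_apply] using this
    · intro x w
      obtain ⟨y, rfl⟩ := L.surjective w
      rw [hDL, hpL, hpL, Matrix.mulVecLin_apply, Matrix.dotProduct_mulVec, Matrix.mulVec_transpose]
    · intro x
      rw [hB, hB, hDL, Matrix.mulVecLin_apply, ← map_smul, ← map_sub, Matrix.mulVec_mulVec,
        Matrix.mulVec_mulVec, ← Matrix.smul_mulVec, ← Matrix.sub_mulVec, ← hrel]
      congr 2
      abel
  have hBν : ∀ x, ν (B x) = 0 := by
    intro x
    rw [hB, hL, map_sum]
    simp only [map_smul, smul_eq_mul, Matrix.mulVec, dotProduct, Finset.sum_mul]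
    rw [Finset.sum_comm]
    apply Finset.sum_eq_zero
    intro j _
    have := PhiM_null n j
    have h2 : ∑ i, PhiM n i j * x j * ν (eB i) = x j * ∑ i, n i * PhiM n i j := by
      rw [Finset.mul_sum]
      exact Finset.sum_congr rfl fun i _ => by show _ = x j * (ν (eB i) * _); ring
    rw [h2, this, mul_zero]
  have hrk : finrank ℂ (LinearMap.range B) = (PhiM n).rank := by
    have : LinearMap.range B = (LinearMap.range (PhiM n).mulVecLin).map L.toLinearMap :=
      LinearMap.range_comp _ _
    rw [this]
    exact LinearEquiv.finrank_map_eq L _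
  have hle : LinearMap.range B ≤ LinearMap.range ι := by
    rintro _ ⟨x, rfl⟩
    exact hνι _ (hBν x)
  refine ⟨(LinearMap.range B).comap ι, ?_, ?_⟩
  · have h1 : ((LinearMap.range B).comap ι).map ι = LinearMap.range B :=
      Submodule.map_comap_eq_of_le hle
    have h2 := (Submodule.equivMapOfInjective ι hι ((LinearMap.range B).comap ι)).finrank_eq
    rw [h2, h1, hrk]
    exact PhiM_rank n hn0
  · rw [← htr, ← hdt]
    obtain ⟨s1, ω, s2, s3, s4⟩ := hS
    refine ⟨?_, ω.compl₁₂ ι ι, ?_, ?_, ?_⟩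
    · intro x hx
      show ι (A x) ∈ LinearMap.range B
      rw [← hA]
      exact s1 _ hx
    · intro x hx
      exact s2 _ hx
    · intro x hx hxy
      apply hι
      rw [map_zero]
      apply s3 _ hx
      intro y hy
      obtain ⟨y', rfl⟩ := hle hy
      exact hxy y' hy
    · intro x hx y hy
      simp only [LinearMap.compl₁₂_apply, ← hA]
      exact s4 _ hx _ hy

theorem nu_setup [FiniteDimensional ℂ g]
    (hg : finrank ℂ g = 7)
    (u : LieIdeal ℂ g) (habel : ∀ x ∈ u, ∀ y ∈ u, ⁅x, y⁆ = (0 : g))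
    (hu : finrank ℂ ↥u = 6) (e₇ : g) (he : e₇ ∉ u) :
    ∃ ν : Module.Dual ℂ g, ν e₇ = 1 ∧ (∀ x, ν x = 0 ↔ x ∈ u) ∧
      (∀ x y : g, ⁅x, y⁆ = ν x • ⁅e₇, y⁆ - ν y • ⁅e₇, x⁆) ∧ ∀ x : g, ν ⁅e₇, x⁆ = 0 := by
  obtain ⟨f, hf, hle⟩ := Submodule.exists_le_ker_of_notMem (p := u.toSubmodule) (v := e₇) he
  have hf0 : f ≠ 0 := by rintro rfl; simp at hf
  have hker : u.toSubmodule = LinearMap.ker f := by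
    apply Submodule.eq_of_le_of_finrank_eq hle
    have h1 := Module.Dual.finrank_ker_add_one_of_ne_zero (f := f) hf0
    have h2 : finrank ℂ u.toSubmodule = 6 := hu
    omega
  have hmem : ∀ x, f x = 0 ↔ x ∈ u := by
    intro x
    rw [← LinearMap.mem_ker, ← hker]
    rfl
  let ν : Module.Dual ℂ g := (f e₇)⁻¹ • f
  have hν : ∀ x, ν x = (f e₇)⁻¹ * f x := fun x => rfl
  have hν1 : ν e₇ = 1 := by rw [hν, inv_mul_cancel₀ hf]
  have hν0 : ∀ x, ν x = 0 ↔ x ∈ u := by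
    intro x
    rw [← hmem, hν]
    simp [hf]
  have hsub : ∀ x, x - ν x • e₇ ∈ u := by
    intro x
    rw [← hν0, map_sub, map_smul, hν1, smul_eq_mul, mul_one, sub_self]
  refine ⟨ν, hν1, hν0, ?_, ?_⟩
  · intro x y
    have h1 := habel _ (hsub x) _ (hsub y)
    simp only [sub_lie, lie_sub, smul_lie, lie_smul, lie_self, smul_zero, sub_zero] at h1
    rw [← lie_skew e₇ x]
    rw [← sub_eq_zero, ← h1]
    module
  · intro x
    rw [hν0]
    have h1 : ⁅e₇, x - ν x • e₇⁆ ∈ u := u.lie_mem (hsub x)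
    simpa using h1

theorem main_thm [FiniteDimensional ℂ g]
    (hg : finrank ℂ g = 7)
    (u : LieIdeal ℂ g) (habel : ∀ x ∈ u, ∀ y ∈ u, ⁅x, y⁆ = (0 : g))
    (hu : finrank ℂ ↥u = 6) (e₇ : g) (he : e₇ ∉ u)
    (adE : ↥u →ₗ[ℂ] ↥u) (hadE : ∀ x : ↥u, (adE x : g) = ⁅e₇, (x : g)⁆) :
    (∃ Ψ : g [⋀^Fin 4]→ₗ[ℂ] ℂ, ceDiff 3 ⇑Ψ = 0 ∧
        ∃ b : Basis (Fin 7) ℂ (Module.Dual ℂ g), Ψ = stdG2 b) ↔ QForm adE := by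
  obtain ⟨ν, hν1, hν0, hbr, hνD⟩ := nu_setup hg u habel hu e₇ he
  let D : g →ₗ[ℂ] g := (LieAlgebra.ad ℂ g e₇ : Module.End ℂ g)
  let ι : ↥u →ₗ[ℂ] g := u.toSubmodule.subtype
  have hι : Function.Injective ι := Subtype.val_injective
  have hA : ∀ x, D (ι x) = ι (adE x) := fun x => (hadE x).symm
  constructor
  · rintro ⟨Ψ, hcl, b, rfl⟩
    obtain ⟨W, hW, hS⟩ := symp_of_lhs ν D hbr hνD (by rintro rfl; simp at hν1) ι hι
      (fun x hx => ⟨⟨x, (hν0 x).1 hx⟩, rfl⟩) adE hA b hcl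
    obtain ⟨W', hW', hS'⟩ := sympOn_four hu adE W hS hW
    exact qform_of_sympOn hu adE W' hW' hS'
  · intro h
    exact lhs_of_q hg ν D hbr hνD e₇ hν1 (lie_self e₇) ι hι (fun x => (hν0 _).2 x.2) adE hA h

end PartEight


/-- Let `g` be a seven-dimensional complex Lie algebra with a
six-dimensional (complex) abelian ideal `u`, `e₇ ∈ g ∖ u`, `u = V₂ ⊕ V₄` with
`dim V₂ = 2`, `dim V₄ = 4`, and let `ω ∈ Λ²V₄*` be a nondegenerate complex two-form.
Then `g` admits a cocalibrated `(G₂)_ℂ`-structure (a closed four-form of the standard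
type `stdG2`) iff `ad(e₇)|_u` is similar under `GL(u)` to an element of the set
`S = {f : f(V₄) ⊆ V₄, pr_{V₄} ∘ f|_{V₄} = -(tr f₂ / 2)·id + f₄, f₄ ∈ sp(V₄,ω)}`,
where `f₂ := pr_{V₂} ∘ f|_{V₂}`. -/
theorem stmt18 {g : Type*} [LieRing g] [LieAlgebra ℂ g] [FiniteDimensional ℂ g]
    (hg : finrank ℂ g = 7)
    (u : LieIdeal ℂ g) (habel : ∀ x ∈ u, ∀ y ∈ u, ⁅x, y⁆ = (0 : g))
    (hu : finrank ℂ ↥u = 6) (e₇ : g) (he : e₇ ∉ u)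
    (V₂ V₄ : Submodule ℂ ↥u) (hc : IsCompl V₂ V₄)
    (h2 : finrank ℂ ↥V₂ = 2) (h4 : finrank ℂ ↥V₄ = 4)
    (ω : ↥V₄ →ₗ[ℂ] ↥V₄ →ₗ[ℂ] ℂ) (halt : ∀ v : ↥V₄, ω v v = 0)
    (hnd : ∀ v : ↥V₄, (∀ w : ↥V₄, ω v w = 0) → v = 0)
    (adE : ↥u →ₗ[ℂ] ↥u) (hadE : ∀ x : ↥u, (adE x : g) = ⁅e₇, (x : g)⁆) :
    (∃ Ψ : g [⋀^Fin 4]→ₗ[ℂ] ℂ, ceDiff 3 ⇑Ψ = 0 ∧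
        ∃ b : Basis (Fin 7) ℂ (Module.Dual ℂ g), Ψ = stdG2 b) ↔
      ∃ T : ↥u ≃ₗ[ℂ] ↥u, ∃ f : ↥u →ₗ[ℂ] ↥u,
        f = T.toLinearMap ∘ₗ adE ∘ₗ T.symm.toLinearMap ∧
        (∀ x : ↥u, x ∈ V₄ → f x ∈ V₄) ∧
        ∃ f₄ : ↥V₄ →ₗ[ℂ] ↥V₄,
          (∀ x y : ↥V₄, ω (f₄ x) y + ω x (f₄ y) = 0) ∧
          ∀ x : ↥V₄,
            (V₄.linearProjOfIsCompl V₂ hc.symm) (f ↑x) =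
              -((LinearMap.trace ℂ ↥V₂)
                  ((V₂.linearProjOfIsCompl V₄ hc) ∘ₗ f ∘ₗ V₂.subtype) / 2) • x +
                f₄ x := by
  exact (main_thm hg u habel hu e₇ he adE hadE).trans
    (rhs_iff hu V₂ V₄ hc h2 h4 ω halt hnd adE).symm
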